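/- arXiv:1902.08064 — 4 statements merged into one kernel-verified Lean document; each statement's English description precedes it below -/
import Mathlib

section
/- Suppose N ∈ ℕ and λ ∈ ℝ satisfy N > λ > 0. Then there is a constant d_{λ,N} > 0 such that for all n ∈ ℕ with n ≥ N, sup_{x∈[−1,1]} |C_n^λ(x)| ≤ d_{λ,N} · ‖C_{n−N}^{λ+N}‖_{L²_{λ+N}} · n^{λ−N}. -/
open MeasureTheory

/-- The Gegenbauer (ultraspherical) polynomial `C_n^λ(x)` (real form). -/
noncomputable def gegenbauerR (l : ℝ) (n : ℕ) (x : ℝ) : ℝ :=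
  ∑ k ∈ Finset.range (n / 2 + 1),
    ((-1 : ℝ) ^ k * (ascPochhammer ℝ (n - k)).eval l /
      ((Nat.factorial k : ℝ) * (Nat.factorial (n - 2 * k) : ℝ))) * (2 * x) ^ (n - 2 * k)

/-- The `L²_λ` norm of `C_n^λ`:
`‖C_n^λ‖_{L²_λ} = (∫_{-1}^1 C_n^λ(x)² (1-x²)^{λ-1/2} dx)^{1/2}`. -/
noncomputable def gegL2Norm (l : ℝ) (n : ℕ) : ℝ :=
  Real.sqrt (∫ x in (-1 : ℝ)..1, gegenbauerR l n x ^ 2 * (1 - x ^ 2) ^ (l - 1 / 2 : ℝ))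

open Polynomial in
/-- recursive polynomial -/
noncomputable def GG (l : ℝ) : ℕ → ℝ[X]
  | 0 => 1
  | 1 => C (2 * l) * X
  | (n + 2) => C (((n : ℝ) + 2)⁻¹) * (C (2 * ((n : ℝ) + 1 + l)) * X * GG l (n + 1)
      - C ((n : ℝ) + 2 * l) * GG l n)

lemma GG_rec (l : ℝ) (n : ℕ) (x : ℝ) :
    ((n : ℝ) + 2) * (GG l (n + 2)).eval x =
      2 * ((n : ℝ) + 1 + l) * x * (GG l (n + 1)).eval x - ((n : ℝ) + 2 * l) * (GG l n).eval x := by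
  have h : ((n : ℝ) + 2) ≠ 0 := by positivity
  rw [GG]
  simp only [Polynomial.eval_mul, Polynomial.eval_sub, Polynomial.eval_C, Polynomial.eval_X]
  field_simp

lemma GG_rec_d (l : ℝ) (n : ℕ) (x : ℝ) :
    ((n : ℝ) + 2) * (GG l (n + 2)).derivative.eval x =
      2 * ((n : ℝ) + 1 + l) * ((GG l (n + 1)).eval x + x * (GG l (n + 1)).derivative.eval x)
       - ((n : ℝ) + 2 * l) * (GG l n).derivative.eval x := by
  have h : ((n : ℝ) + 2) ≠ 0 := by positivity
  rw [GG]
  simp only [Polynomial.derivative_mul, Polynomial.derivative_sub, Polynomial.derivative_C,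
    Polynomial.derivative_X, Polynomial.eval_add, Polynomial.eval_zero, Polynomial.eval_one,
    Polynomial.eval_mul, Polynomial.eval_sub, Polynomial.eval_C, Polynomial.eval_X]
  field_simp
  ring

lemma GG_AB (l : ℝ) (n : ℕ) (x : ℝ) :
    (x * (GG l (n + 1)).derivative.eval x - (GG l n).derivative.eval x
      = ((n : ℝ) + 1) * (GG l (n + 1)).eval x) ∧
    ((GG l (n + 1)).derivative.eval x - x * (GG l n).derivative.eval x
      = ((n : ℝ) + 2 * l) * (GG l n).eval x) := by
  induction n with
  | zero => simp [GG]; ring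
  | succ n ih =>
    obtain ⟨hA, hB⟩ := ih
    have h : ((n : ℝ) + 2) ≠ 0 := by positivity
    have r := GG_rec l n x
    have rd := GG_rec_d l n x
    have hB' : (GG l (n + 2)).derivative.eval x - x * (GG l (n + 1)).derivative.eval x
      = ((n : ℝ) + 1 + 2 * l) * (GG l (n + 1)).eval x := by
      apply mul_left_cancel₀ h
      linear_combination rd + ((n : ℝ) + 2 * l) * hA
    push_cast
    refine ⟨?_, hB'⟩
    linear_combination x * hB' - r + x * hA - hB

lemma GG_E (l : ℝ) (n : ℕ) (x : ℝ) :
    (1 - x ^ 2) * (GG l (n + 1)).derivative.eval x =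
      ((n : ℝ) + 2 * l) * (GG l n).eval x - ((n : ℝ) + 1) * x * (GG l (n + 1)).eval x := by
  obtain ⟨hA, hB⟩ := GG_AB l n x
  linear_combination hB - x * hA

lemma GG_ode (l : ℝ) (n : ℕ) (x : ℝ) :
    (1 - x ^ 2) * (GG l n).derivative.derivative.eval x
      - (2 * l + 1) * x * (GG l n).derivative.eval x
      + (n : ℝ) * (n + 2 * l) * (GG l n).eval x = 0 := by
  cases n with
  | zero => simp [GG]
  | succ n =>
    have hP : (1 - Polynomial.X ^ 2) * (GG l (n + 1)).derivative =
      Polynomial.C ((n : ℝ) + 2 * l) * (GG l n)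
        - Polynomial.C ((n : ℝ) + 1) * Polynomial.X * (GG l (n + 1)) := by
      apply Polynomial.funext
      intro y
      have := GG_E l n y
      simpa only [Polynomial.eval_mul, Polynomial.eval_sub, Polynomial.eval_C, Polynomial.eval_X,
        Polynomial.eval_pow, Polynomial.eval_one] using this
    have h2 := congrArg (fun p => (Polynomial.derivative p).eval x) hP
    simp only [Polynomial.derivative_mul, Polynomial.derivative_sub, Polynomial.derivative_C,
      Polynomial.derivative_X, Polynomial.derivative_one, Polynomial.derivative_X_pow,
      Polynomial.eval_add, Polynomial.eval_zero, Polynomial.eval_one, Polynomial.eval_pow,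
      Polynomial.eval_mul, Polynomial.eval_sub, Polynomial.eval_C, Polynomial.eval_X] at h2
    obtain ⟨hA, hB⟩ := GG_AB l n x
    push_cast at h2 ⊢
    linear_combination h2 - ((n : ℝ) + 2 * l) * hA

/-- auxiliary term -/
noncomputable def gt (l x : ℝ) (n k : ℕ) : ℝ :=
  if 2 * k ≤ n then ((-1 : ℝ) ^ k * (ascPochhammer ℝ (n - k)).eval l /
      ((Nat.factorial k : ℝ) * (Nat.factorial (n - 2 * k) : ℝ))) * (2 * x) ^ (n - 2 * k) else 0

lemma geg_eq_sum (l x : ℝ) (n M : ℕ) (hM : n / 2 + 1 ≤ M) :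
    gegenbauerR l n x = ∑ k ∈ Finset.range M, gt l x n k := by
  unfold gegenbauerR
  rw [← Finset.sum_subset (Finset.range_mono hM)]
  · apply Finset.sum_congr rfl
    intro k hk
    rw [Finset.mem_range] at hk
    rw [gt, if_pos (by omega)]
  · intro k _ hk
    rw [Finset.mem_range] at hk
    rw [gt, if_neg (by omega)]

lemma gt_zero (l x : ℝ) (n : ℕ) :
    ((n : ℝ) + 2) * gt l x (n + 2) 0 = ((n : ℝ) + 1 + l) * (2 * x) * gt l x (n + 1) 0 := by
  have : ((n+1).factorial : ℝ) ≠ 0 := by positivity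
  simp only [gt, Nat.mul_zero, Nat.zero_le, if_true, Nat.sub_zero, ascPochhammer_succ_eval,
    Nat.factorial_succ (n+1)]
  push_cast
  field_simp
  ring

lemma gt_succ (l x : ℝ) (n k : ℕ) :
    ((n : ℝ) + 2) * gt l x (n + 2) (k + 1) = ((n : ℝ) + 1 + l) * (2 * x) * gt l x (n + 1) (k + 1)
      - ((n : ℝ) + 2 * l) * gt l x n k := by
  by_cases h : 2 * k ≤ n
  · obtain ⟨j, rfl⟩ := Nat.exists_eq_add_of_le h
    have hk : (k.factorial : ℝ) ≠ 0 := by positivity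
    have hk1 : (k : ℝ) + 1 ≠ 0 := by positivity
    rcases j with _ | j
    · rw [gt, if_pos (by omega), gt, if_neg (by omega), gt, if_pos (by omega)]
      rw [show 2 * k + 0 + 2 - (k + 1) = k + 1 by omega, show 2 * k + 0 - k = k by omega,
        show 2 * k + 0 + 2 - 2 * (k + 1) = 0 by omega, show 2 * k + 0 - 2 * k = 0 by omega,
        ascPochhammer_succ_eval, Nat.factorial_succ k]
      push_cast
      field_simp
      ring
    · have hj : (j.factorial : ℝ) ≠ 0 := by positivity
      have hj1 : (j : ℝ) + 1 ≠ 0 := by positivity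
      rw [gt, if_pos (by omega), gt, if_pos (by omega), gt, if_pos (by omega)]
      rw [show 2 * k + (j + 1) + 2 - (k + 1) = k + j + 1 + 1 by omega,
        show 2 * k + (j + 1) - k = k + j + 1 by omega,
        show 2 * k + (j + 1) + 1 - (k + 1) = k + j + 1 by omega,
        show 2 * k + (j + 1) + 2 - 2 * (k + 1) = j + 1 by omega,
        show 2 * k + (j + 1) + 1 - 2 * (k + 1) = j by omega,
        show 2 * k + (j + 1) - 2 * k = j + 1 by omega,
        ascPochhammer_succ_eval (k+j+1), Nat.factorial_succ k, Nat.factorial_succ j]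
      push_cast
      field_simp
      ring
  · rw [gt, if_neg (by omega), gt, if_neg (by omega), gt, if_neg (by omega)]
    ring

lemma geg_rec (l : ℝ) (n : ℕ) (x : ℝ) :
    ((n : ℝ) + 2) * gegenbauerR l (n + 2) x =
      2 * ((n : ℝ) + 1 + l) * x * gegenbauerR l (n + 1) x
        - ((n : ℝ) + 2 * l) * gegenbauerR l n x := by
  rw [geg_eq_sum l x (n + 2) (n + 3) (by omega), geg_eq_sum l x (n + 1) (n + 3) (by omega),
    geg_eq_sum l x n (n + 2) (by omega), Finset.sum_range_succ', Finset.sum_range_succ' _ (n + 2),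
    mul_add, Finset.mul_sum, mul_add, Finset.mul_sum, Finset.mul_sum, gt_zero]
  simp only [gt_succ]
  rw [Finset.sum_sub_distrib]
  have : ∀ k, 2 * ((n : ℝ) + 1 + l) * x * gt l x (n + 1) k
    = ((n : ℝ) + 1 + l) * (2 * x) * gt l x (n + 1) k := by intro k; ring
  simp only [this]
  ring

lemma geg_eq_GG (l : ℝ) (x : ℝ) (n : ℕ) : gegenbauerR l n x = (GG l n).eval x := by
  induction n using Nat.strong_induction_on with
  | _ n ih =>
    match n with
    | 0 => simp [gegenbauerR, GG]
    | 1 => simp [gegenbauerR, GG]; ring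
    | n + 2 =>
      have h : ((n : ℝ) + 2) ≠ 0 := by positivity
      apply mul_left_cancel₀ h
      rw [geg_rec, GG_rec, ih n (by omega), ih (n + 1) (by omega)]

/-- the ratio (a)_n / n! -/
noncomputable def rr (a : ℝ) : ℕ → ℝ
  | 0 => 1
  | (n + 1) => rr a n * (a + n) / (n + 1)

lemma rr_pos {a : ℝ} (ha : 0 < a) (n : ℕ) : 0 < rr a n := by
  induction n with
  | zero => simp [rr]
  | succ n ih => rw [rr]; positivity

lemma GG_one (l : ℝ) (n : ℕ) : (GG l n).eval 1 = rr (2 * l) n := by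
  induction n with
  | zero => simp [GG, rr]
  | succ n ih =>
    have := GG_E l n 1
    rw [rr, ← ih]
    have h : (n : ℝ) + 1 ≠ 0 := by positivity
    field_simp
    linear_combination this

lemma GG_neg_one (l : ℝ) (n : ℕ) : (GG l n).eval (-1) = (-1) ^ n * rr (2 * l) n := by
  induction n with
  | zero => simp [GG, rr]
  | succ n ih =>
    have := GG_E l n (-1)
    have h : (n : ℝ) + 1 ≠ 0 := by positivity
    rw [rr]
    rw [ih] at this
    field_simp
    rw [pow_succ]
    linear_combination -this

lemma GG_bound {l : ℝ} (hl : 0 < l) (n : ℕ) (x : ℝ) (hx : x ∈ Set.Icc (-1 : ℝ) 1) :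
    |(GG l n).eval x| ≤ rr (2 * l) n := by
  rcases Nat.eq_zero_or_pos n with rfl | hn
  · simp [GG, rr]
  have hn' : (0 : ℝ) < n := by exact_mod_cast hn
  have hc : 0 < (n : ℝ) * (n + 2 * l) := by positivity
  set F : ℝ → ℝ := fun y => (n : ℝ) * (n + 2 * l) * (GG l n).eval y ^ 2
    + (1 - y ^ 2) * (GG l n).derivative.eval y ^ 2 with hF
  have hd : ∀ y, HasDerivAt F (4 * l * y * (GG l n).derivative.eval y ^ 2) y := by
    intro y
    have h1 := (((GG l n).hasDerivAt y).pow 2).const_mul ((n : ℝ) * (n + 2 * l))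
    have h2 := (((hasDerivAt_id y).pow 2).const_sub 1).mul
      (((GG l n).derivative.hasDerivAt y).pow 2)
    refine (h1.add h2).congr_deriv ?_
    have := GG_ode l n y
    simp
    linear_combination 2 * (GG l n).derivative.eval y * this
  have hcont : Continuous F := by
    exact continuous_iff_continuousAt.2 fun y => (hd y).continuousAt
  have key : F x ≤ (n : ℝ) * (n + 2 * l) * rr (2 * l) n ^ 2 := by
    rcases le_total 0 x with h0 | h0
    · have hm : MonotoneOn F (Set.Icc 0 1) := by
        apply monotoneOn_of_deriv_nonneg (convex_Icc 0 1) hcont.continuousOn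
        · exact fun y _ => (hd y).differentiableAt.differentiableWithinAt
        · intro y hy
          rw [interior_Icc] at hy
          rw [(hd y).deriv]
          have := hy.1
          positivity
      have := hm ⟨h0, hx.2⟩ ⟨zero_le_one, le_rfl⟩ hx.2
      refine this.trans ?_
      simp [hF, GG_one]
    · have hm : AntitoneOn F (Set.Icc (-1) 0) := by
        apply antitoneOn_of_deriv_nonpos (convex_Icc _ _) hcont.continuousOn
        · exact fun y _ => (hd y).differentiableAt.differentiableWithinAt
        · intro y hy
          rw [interior_Icc] at hy
          rw [(hd y).deriv]
          have h1 : 4 * l * y ≤ 0 := by nlinarith [hy.2]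
          exact mul_nonpos_of_nonpos_of_nonneg h1 (sq_nonneg _)
      have := hm ⟨le_rfl, by norm_num⟩ ⟨hx.1, h0⟩ hx.1
      refine this.trans ?_
      simp [hF, GG_neg_one, mul_pow, ← pow_mul, mul_comm n 2]
  have h1 : 0 ≤ (1 - x ^ 2) * (GG l n).derivative.eval x ^ 2 := by
    have : 0 ≤ 1 - x ^ 2 := by nlinarith [hx.1, hx.2]
    positivity
  have h2 : (GG l n).eval x ^ 2 ≤ rr (2 * l) n ^ 2 := by
    apply le_of_mul_le_mul_left _ hc
    simp only [hF] at key
    linarith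
  exact abs_le_of_sq_le_sq h2 (rr_pos (by positivity) n).le

/-- weighted integral -/
noncomputable def LL (l : ℝ) (p : Polynomial ℝ) : ℝ :=
  ∫ x in (-1 : ℝ)..1, p.eval x * (1 - x ^ 2) ^ (l - 1 / 2 : ℝ)

lemma w_cont {l : ℝ} (hl : 1 / 2 < l) (p : Polynomial ℝ) :
    Continuous fun x : ℝ => p.eval x * (1 - x ^ 2) ^ (l - 1 / 2 : ℝ) := by
  apply p.continuous.mul
  apply Continuous.rpow_const (by fun_prop)
  intro x; right; linarith

lemma LL_add {l : ℝ} (hl : 1 / 2 < l) (p q : Polynomial ℝ) : LL l (p + q) = LL l p + LL l q := by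
  unfold LL
  rw [← intervalIntegral.integral_add ((w_cont hl p).intervalIntegrable _ _)
    ((w_cont hl q).intervalIntegrable _ _)]
  simp [add_mul]

lemma LL_smul {l : ℝ} (c : ℝ) (p : Polynomial ℝ) :
    LL l (Polynomial.C c * p) = c * LL l p := by
  unfold LL
  rw [← intervalIntegral.integral_const_mul]
  simp [mul_assoc]

open Polynomial in
lemma LL_ibp {l : ℝ} (hl : 1 / 2 < l) (q : ℝ[X]) :
    LL l ((1 - X ^ 2) * derivative q - C (2 * l + 1) * X * q) = 0 := by
  have hd : ∀ y ∈ Set.uIcc (-1 : ℝ) 1,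
      HasDerivAt (fun y : ℝ => q.eval y * (1 - y ^ 2) ^ (l + 1 / 2 : ℝ))
      (((1 - X ^ 2) * derivative q - C (2 * l + 1) * X * q).eval y
        * (1 - y ^ 2) ^ (l - 1 / 2 : ℝ)) y := by
    intro y hy
    rw [Set.uIcc_of_le (by norm_num)] at hy
    have h0 : 0 ≤ 1 - y ^ 2 := by nlinarith [hy.1, hy.2]
    have h1 : HasDerivAt (fun y : ℝ => 1 - y ^ 2) (-(2 * y)) y := by
      simpa using ((hasDerivAt_id y).pow 2).const_sub 1
    have h2 := h1.rpow_const (p := l + 1 / 2) (Or.inr (by linarith))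
    refine ((q.hasDerivAt y).mul h2).congr_deriv ?_
    have e : (1 - y ^ 2) ^ (l + 1 / 2 : ℝ) = (1 - y ^ 2) ^ (l - 1 / 2 : ℝ) * (1 - y ^ 2) := by
      rw [← Real.rpow_add_one' h0 (by linarith)]
      congr 1; ring
    rw [e, show l + 1 / 2 - 1 = l - 1 / 2 by ring]
    simp
    ring
  unfold LL
  rw [intervalIntegral.integral_eq_sub_of_hasDerivAt hd ((w_cont hl _).intervalIntegrable _ _)]
  have : l + 1 / 2 ≠ 0 := by linarith
  norm_num
  rw [Real.zero_rpow (by simpa using this)]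
  simp

open Polynomial in
lemma LL_orth {l : ℝ} (hl : 1 / 2 < l) (n : ℕ) : LL l (GG l (n + 2) * GG l n) = 0 := by
  have h := LL_ibp hl (derivative (GG l (n + 2)) * GG l n - GG l (n + 2) * derivative (GG l n))
  have e : (1 - X ^ 2) * derivative (derivative (GG l (n + 2)) * GG l n
      - GG l (n + 2) * derivative (GG l n)) - C (2 * l + 1) * X *
      (derivative (GG l (n + 2)) * GG l n - GG l (n + 2) * derivative (GG l n))
      = C (-(4 * (n + 1 + l))) * (GG l (n + 2) * GG l n) := by
    apply Polynomial.funext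
    intro y
    have h1 := GG_ode l (n + 2) y
    have h2 := GG_ode l n y
    push_cast at h1
    simp only [derivative_mul, derivative_sub, eval_mul, eval_sub, eval_add, eval_C, eval_X,
      eval_pow, eval_one]
    linear_combination (GG l n).eval y * h1 - (GG l (n + 2)).eval y * h2
  rw [e, LL_smul] at h
  rcases mul_eq_zero.1 h with h | h
  · exfalso
    have : (0 : ℝ) ≤ n := by positivity
    linarith
  · exact h

open Polynomial in
lemma LL_step {l : ℝ} (hl : 1 / 2 < l) (n : ℕ) :
    ((n : ℝ) + 1) * (n + 1 + l) * LL l (GG l (n + 1) * GG l (n + 1)) =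
      (n + l) * (n + 2 * l) * LL l (GG l n * GG l n) := by
  have hX : ∀ n : ℕ, (2 * ((n : ℝ) + 1 + l)) * LL l (X * GG l (n + 1) * GG l n) =
      ((n : ℝ) + 2 * l) * LL l (GG l n * GG l n) := by
    intro n
    have e : C (2 * ((n : ℝ) + 1 + l)) * (X * GG l (n + 1) * GG l n) =
      C ((n : ℝ) + 2) * (GG l (n + 2) * GG l n) + C ((n : ℝ) + 2 * l) * (GG l n * GG l n) := by
      apply Polynomial.funext
      intro y
      have := GG_rec l n y
      simp only [eval_mul, eval_add, eval_C, eval_X]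
      linear_combination -(GG l n).eval y * this
    have := congrArg (LL l) e
    rw [LL_add hl, LL_smul, LL_smul, LL_smul, LL_orth hl] at this
    linarith
  have hY : ((n : ℝ) + 1) * LL l (GG l (n + 1) * GG l (n + 1)) =
      (2 * ((n : ℝ) + l)) * LL l (X * GG l (n + 1) * GG l n) := by
    rw [← LL_smul, ← LL_smul]
    rcases n with _ | n
    · congr 1
      apply Polynomial.funext
      intro y
      simp [GG]; ring
    · have e : C (2 * (((n + 1 : ℕ) : ℝ) + l)) * (X * GG l (n + 2) * GG l (n + 1)) =
        C (((n + 1 : ℕ) : ℝ) + 1) * (GG l (n + 2) * GG l (n + 2))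
          + C ((n : ℝ) + 2 * l) * (GG l (n + 2) * GG l n) := by
        apply Polynomial.funext
        intro y
        have := GG_rec l n y
        simp only [eval_mul, eval_add, eval_C, eval_X]
        push_cast
        linear_combination -(GG l (n + 2)).eval y * this
      rw [e, LL_add hl, LL_smul (l := l) ((n : ℝ) + 2 * l), LL_orth hl]
      simp
  linear_combination (n + 1 + l) * hY + (n + l) * hX n

lemma LL_formula {l : ℝ} (hl : 1 / 2 < l) (n : ℕ) :
    (n + l) * LL l (GG l n * GG l n) = l * rr (2 * l) n * LL l 1 := by
  induction n with
  | zero => simp [GG, rr]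
  | succ n ih =>
    have h := LL_step hl n
    have h1 : (n : ℝ) + 1 ≠ 0 := by positivity
    apply mul_left_cancel₀ h1
    rw [rr]
    push_cast
    generalize rr (2 * l) n = R at *
    field_simp
    linear_combination h + (n + 2 * l) * ih

lemma LL_one_pos {l : ℝ} (hl : 1 / 2 < l) : 0 < LL l 1 := by
  unfold LL
  apply intervalIntegral.intervalIntegral_pos_of_pos_on
    ((w_cont hl _).intervalIntegrable _ _) _ (by norm_num)
  intro x hx
  have : 0 < 1 - x ^ 2 := by nlinarith [hx.1, hx.2]
  simp only [Polynomial.eval_one, one_mul]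
  positivity

lemma rr_gamma {a : ℝ} (ha : 0 < a) (n : ℕ) :
    rr a n * (a + n) * Real.GammaSeq a n = (n : ℝ) ^ a := by
  have h : ∀ n : ℕ, rr a n * (n.factorial : ℝ) = ∏ j ∈ Finset.range n, (a + j) := by
    intro n
    induction n with
    | zero => simp [rr]
    | succ n ih =>
      have h1 : (n : ℝ) + 1 ≠ 0 := by positivity
      rw [Finset.prod_range_succ, ← ih, rr, Nat.factorial_succ]
      push_cast
      field_simp
  have hp : 0 < ∏ j ∈ Finset.range n, (a + j) := Finset.prod_pos fun j _ => by positivity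
  rw [Real.GammaSeq, Finset.prod_range_succ, ← h n]
  have := (rr_pos ha n).ne'
  have h3 : a + n ≠ 0 := by positivity
  have h4 : (n.factorial : ℝ) ≠ 0 := by positivity
  field_simp

lemma rr_bounds {a : ℝ} (ha : 0 < a) : ∃ c K : ℝ, 0 < c ∧ 0 < K ∧
    ∀ n : ℕ, 1 ≤ n → c * (n : ℝ) ^ (a - 1) ≤ rr a n ∧ rr a n ≤ K * (n : ℝ) ^ (a - 1) := by
  have ht := Real.GammaSeq_tendsto_Gamma a
  have hg : ∀ n : ℕ, 1 ≤ n → 0 < Real.GammaSeq a n := by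
    intro n hn
    have : (0 : ℝ) < n := by exact_mod_cast hn
    have hp : 0 < ∏ j ∈ Finset.range (n + 1), (a + j) := Finset.prod_pos fun j _ => by positivity
    rw [Real.GammaSeq]
    positivity
  obtain ⟨q, hq⟩ := ht.bddAbove_range
  have ht' := ht.inv₀ (Real.Gamma_pos_of_pos ha).ne'
  obtain ⟨p, hp⟩ := ht'.bddAbove_range
  have hq' : ∀ n : ℕ, Real.GammaSeq a n ≤ q := fun n => hq ⟨n, rfl⟩
  have hp' : ∀ n : ℕ, (Real.GammaSeq a n)⁻¹ ≤ p := fun n => hp ⟨n, rfl⟩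
  have q0 : 0 < q := (hg 1 le_rfl).trans_le (hq' 1)
  have p0 : 0 < p := (inv_pos.2 (hg 1 le_rfl)).trans_le (hp' 1)
  refine ⟨((a + 1) * q)⁻¹, p, by positivity, p0, fun n hn => ?_⟩
  have hn1 : (1 : ℝ) ≤ n := by exact_mod_cast hn
  have hn0 : (0 : ℝ) < n := by linarith
  have e : (n : ℝ) ^ a = n ^ (a - 1) * n := by
    rw [Real.rpow_sub_one hn0.ne']; field_simp
  have hm := rr_gamma ha n
  have hr : rr a n = (n : ℝ) ^ (a - 1) * n / (a + n) * (Real.GammaSeq a n)⁻¹ := by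
    rw [← e, ← hm]
    have := (hg n hn).ne'
    have : a + n ≠ 0 := by positivity
    field_simp
  have hT : 0 < (n : ℝ) ^ (a - 1) := by positivity
  rw [hr]
  constructor
  · have h1 : q⁻¹ ≤ (Real.GammaSeq a n)⁻¹ := inv_anti₀ (hg n hn) (hq' n)
    have h2 : (a + 1)⁻¹ ≤ n / (a + n) := by
      rw [inv_eq_one_div, div_le_div_iff₀ (by positivity) (by positivity)]
      nlinarith
    calc ((a + 1) * q)⁻¹ * (n : ℝ) ^ (a - 1)
        = (n : ℝ) ^ (a - 1) * (a + 1)⁻¹ * q⁻¹ := by rw [mul_inv]; ring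
      _ ≤ (n : ℝ) ^ (a - 1) * (n / (a + n)) * (Real.GammaSeq a n)⁻¹ := by gcongr
      _ = _ := by ring
  · have h2 : n / (a + n) ≤ 1 := by
      rw [div_le_one (by positivity)]; linarith
    have h3 := (hg n hn)
    calc (n : ℝ) ^ (a - 1) * n / (a + n) * (Real.GammaSeq a n)⁻¹
        = (n : ℝ) ^ (a - 1) * (n / (a + n)) * (Real.GammaSeq a n)⁻¹ := by ring
      _ ≤ (n : ℝ) ^ (a - 1) * 1 * p := by
          gcongr
          exact hp' n
      _ = _ := by ring

lemma gegL2Norm_eq (l : ℝ) (n : ℕ) : gegL2Norm l n = Real.sqrt (LL l (GG l n * GG l n)) := by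
  unfold gegL2Norm LL
  simp only [geg_eq_GG, Polynomial.eval_mul, sq]

lemma LL_lower {l : ℝ} (hl : 1 ≤ l) (N : ℕ) (hN : 1 ≤ N) : ∃ c : ℝ, 0 < c ∧
    ∀ m : ℕ, c * ((m + N : ℕ) : ℝ) ^ (2 * l - 2) ≤ LL l (GG l m * GG l m) := by
  have hl' : 1 / 2 < l := by linarith
  have h0 := LL_one_pos hl'
  obtain ⟨c, K, hc, hK, hb⟩ := rr_bounds (a := 2 * l) (by linarith)
  have hN1 : (1 : ℝ) ≤ N := by exact_mod_cast hN
  set c1 := l * c * LL l 1 / (1 + l) / ((N : ℝ) + 1) ^ (2 * l - 2) with hc1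
  set c0 := LL l 1 / (N : ℝ) ^ (2 * l - 2) with hc0
  have hc1p : 0 < c1 := by positivity
  have hc0p : 0 < c0 := by positivity
  refine ⟨min c0 c1, lt_min hc0p hc1p, fun m => ?_⟩
  rcases Nat.eq_zero_or_pos m with rfl | hm
  · have hT : 0 < (N : ℝ) ^ (2 * l - 2) := by positivity
    calc min c0 c1 * ((0 + N : ℕ) : ℝ) ^ (2 * l - 2) ≤ c0 * (N : ℝ) ^ (2 * l - 2) := by
          rw [zero_add]; gcongr; exact min_le_left _ _
      _ = LL l 1 := by rw [hc0]; field_simp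
      _ = _ := by simp [GG]
  · have hm1 : (1 : ℝ) ≤ m := by exact_mod_cast hm
    have hm0 : (0 : ℝ) < m := by linarith
    have h1 : ((m + N : ℕ) : ℝ) ^ (2 * l - 2) ≤
        ((N : ℝ) + 1) ^ (2 * l - 2) * (m : ℝ) ^ (2 * l - 2) := by
      rw [← Real.mul_rpow (by positivity) (by positivity)]
      apply Real.rpow_le_rpow (by positivity) _ (by linarith)
      push_cast
      nlinarith
    have hf := LL_formula hl' m
    have hf' : LL l (GG l m * GG l m) = l * rr (2 * l) m * LL l 1 / (m + l) := by
      rw [← hf]; field_simp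
    have hT : 0 < ((N : ℝ) + 1) ^ (2 * l - 2) := by positivity
    have e : (m : ℝ) ^ (2 * l - 1) = m ^ (2 * l - 2) * m := by
      rw [← Real.rpow_add_one hm0.ne']; congr 1; ring
    calc min c0 c1 * ((m + N : ℕ) : ℝ) ^ (2 * l - 2)
        ≤ c1 * (((N : ℝ) + 1) ^ (2 * l - 2) * (m : ℝ) ^ (2 * l - 2)) := by
          gcongr; exact min_le_right _ _
      _ = l * (c * (m : ℝ) ^ (2 * l - 1)) * LL l 1 / ((1 + l) * m) := by
          rw [hc1, e]; field_simp
      _ ≤ l * rr (2 * l) m * LL l 1 / (m + l) := by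
          have := (hb m hm).1
          have h5 := rr_pos (a := 2 * l) (by linarith) m
          have h6 : (m : ℝ) + l ≤ (1 + l) * m := by nlinarith
          gcongr
      _ = _ := hf'.symm

theorem stmt7 (N : ℕ) (lam : ℝ) (hN : lam < N) (hlam : 0 < lam) :
    ∃ d : ℝ, 0 < d ∧
      ∀ n : ℕ, N ≤ n → ∀ x ∈ Set.Icc (-1 : ℝ) 1,
        |gegenbauerR lam n x| ≤
          d * gegL2Norm (lam + N) (n - N) * (n : ℝ) ^ (lam - (N : ℝ)) := by
  have hN0 : (0 : ℝ) < N := hlam.trans hN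
  have hN1 : 1 ≤ N := by exact_mod_cast hN0
  have hN1' : (1 : ℝ) ≤ N := by exact_mod_cast hN1
  obtain ⟨c, hc, hL⟩ := LL_lower (l := lam + N) (by linarith) N hN1
  obtain ⟨_, K, _, hK, hb⟩ := rr_bounds (a := 2 * lam) (by linarith)
  refine ⟨K / Real.sqrt c, by positivity, fun n hn x hx => ?_⟩
  have hn0 : (0 : ℝ) < n := by exact_mod_cast (by omega : 0 < n)
  have h1 := hL (n - N)
  rw [Nat.sub_add_cancel hn] at h1
  have h2 : Real.sqrt c * (n : ℝ) ^ (lam + N - 1) ≤ gegL2Norm (lam + N) (n - N) := by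
    rw [gegL2Norm_eq]
    apply Real.le_sqrt_of_sq_le
    rw [mul_pow, Real.sq_sqrt hc.le, ← Real.rpow_natCast, ← Real.rpow_mul hn0.le]
    refine le_trans (le_of_eq ?_) h1
    congr 2
    push_cast
    ring
  rw [geg_eq_GG]
  have hs : 0 < Real.sqrt c := by positivity
  calc |(GG lam n).eval x| ≤ rr (2 * lam) n := GG_bound hlam n x hx
    _ ≤ K * (n : ℝ) ^ (2 * lam - 1) := (hb n (by omega)).2
    _ = K / Real.sqrt c * (Real.sqrt c * (n : ℝ) ^ (lam + N - 1)) * (n : ℝ) ^ (lam - (N : ℝ)) := by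
        rw [show 2 * lam - 1 = (lam + N - 1) + (lam - N) by ring, Real.rpow_add hn0]
        field_simp
    _ ≤ _ := by gcongr
end

section
/- Let ρ ∈ ℂ with Re ρ > 0 and γ ∈ {0,1}. Then for all real φ, ψ, |cos φ + cos ψ|^ρ · sgn(cos φ + cos ψ)^γ = 2^{−ρ} Γ(ρ+1)² · Σ cos(ℓφ) cos(mψ) / ∏_{δ,ε∈{±1}} Γ(1 + (ρ + δℓ + εm)/2), where the sum ranges over all pairs (ℓ, m) ∈ ℤ² with ℓ ≡ m + γ (mod 2). -/
namespace S11
open Complex MeasureTheory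

noncomputable def cc (ρ : ℂ) (k : ℤ) : ℂ :=
  Gamma (ρ + 1) * ((Gamma (1 + (ρ + k) / 2))⁻¹ * (Gamma (1 + (ρ - k) / 2))⁻¹)

noncomputable def JJ (ρ : ℂ) (k : ℤ) : ℂ :=
  ∫ a in (-(Real.pi / 2))..(Real.pi / 2), ((2 * Real.cos a : ℝ) : ℂ) ^ ρ * cexp (I * k * a)

lemma cc_neg (ρ : ℂ) (k : ℤ) : cc ρ (-k) = cc ρ k := by
  unfold cc
  push_cast
  rw [sub_neg_eq_add, ← sub_eq_add_neg]
  ring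

lemma cc_rec (ρ : ℂ) (k : ℤ) : (ρ + 1 + k) * cc ρ (k + 1) = (ρ + 1 - k) * cc ρ (k - 1) := by
  unfold cc
  have h1 := one_div_Gamma_eq_self_mul_one_div_Gamma_add_one ((ρ + 1 + k) / 2)
  have h2 := one_div_Gamma_eq_self_mul_one_div_Gamma_add_one ((ρ + 1 - k) / 2)
  push_cast
  rw [show 1 + (ρ + ((k : ℂ) + 1)) / 2 = (ρ + 1 + k) / 2 + 1 by ring,
    show 1 + (ρ - ((k : ℂ) + 1)) / 2 = (ρ + 1 - k) / 2 by ring,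
    show 1 + (ρ + ((k : ℂ) - 1)) / 2 = (ρ + 1 + k) / 2 by ring,
    show 1 + (ρ - ((k : ℂ) - 1)) / 2 = (ρ + 1 - k) / 2 + 1 by ring, h1, h2]
  ring

lemma cont_int {ρ : ℂ} (hρ : 0 < ρ.re) (k : ℤ) :
    Continuous (fun a : ℝ => ((2 * Real.cos a : ℝ) : ℂ) ^ ρ * cexp (I * k * a)) := by
  have h := (continuous_ofReal_cpow_const hρ).comp (f := fun a : ℝ => 2 * Real.cos a)
    (by fun_prop)
  exact h.mul (by fun_prop)

lemma JJ_neg (ρ : ℂ) (k : ℤ) : JJ ρ (-k) = JJ ρ k := by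
  unfold JJ
  have := intervalIntegral.integral_comp_neg (a := -(Real.pi / 2)) (b := Real.pi / 2)
    (f := fun a : ℝ => ((2 * Real.cos a : ℝ) : ℂ) ^ ρ * cexp (I * k * a))
  rw [neg_neg] at this
  rw [← this]
  congr 1
  ext a
  rw [Real.cos_neg]
  push_cast
  ring_nf

lemma JJ_pascal {ρ : ℂ} (hρ : 0 < ρ.re) (k : ℤ) :
    JJ (ρ + 1) k = JJ ρ (k + 1) + JJ ρ (k - 1) := by
  unfold JJ
  rw [← intervalIntegral.integral_add ((cont_int hρ _).intervalIntegrable _ _)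
    ((cont_int hρ _).intervalIntegrable _ _)]
  apply intervalIntegral.integral_congr
  intro a ha
  simp only
  have e1 : ((2 * Real.cos a : ℝ) : ℂ) = cexp (I * a) + cexp (-(I * a)) := by
    push_cast
    rw [Complex.cos]
    ring_nf
  have e2 : ((2 * Real.cos a : ℝ) : ℂ) ^ (ρ + 1)
      = ((2 * Real.cos a : ℝ) : ℂ) ^ ρ * (cexp (I * a) + cexp (-(I * a))) := by
    rw [← e1]
    by_cases h : ((2 * Real.cos a : ℝ) : ℂ) = 0
    · rw [h, zero_cpow]
      · simp
      · intro h
        have := congrArg re h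
        simp at this
        linarith
    · rw [cpow_add _ _ h, cpow_one]
  rw [e2]
  push_cast
  rw [show I * ((k : ℂ) + 1) * a = I * k * a + I * a by ring,
    show I * ((k : ℂ) - 1) * a = I * k * a + -(I * a) by ring, exp_add, exp_add]
  ring

lemma JJ_rec {ρ : ℂ} (hρ : 0 < ρ.re) (k : ℤ) :
    (ρ + 1 + k) * JJ ρ (k + 1) = (ρ + 1 - k) * JJ ρ (k - 1) := by
  have hρ1 : 0 < (ρ + 1).re := by simp; linarith
  have hne : ρ + 1 ≠ 0 := by
    intro h
    rw [h] at hρ1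
    simp at hρ1
  have hpi := Real.pi_pos
  have key := intervalIntegral.integral_eq_sub_of_hasDerivAt_of_le (E := ℂ)
    (a := -(Real.pi / 2)) (b := Real.pi / 2)
    (f := fun a : ℝ => ((2 * Real.cos a : ℝ) : ℂ) ^ (ρ + 1) * cexp (I * k * a))
    (f' := fun a : ℝ => I * ((ρ + 1 + k) * (((2 * Real.cos a : ℝ) : ℂ) ^ ρ * cexp (I * (k + 1 : ℤ) * a))
      - (ρ + 1 - k) * (((2 * Real.cos a : ℝ) : ℂ) ^ ρ * cexp (I * (k - 1 : ℤ) * a))))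
    (by linarith) (cont_int hρ1 k).continuousOn ?_ ?_
  · simp only [Real.cos_neg, Real.cos_pi_div_two, mul_zero, ofReal_zero, zero_cpow hne, zero_mul,
      sub_zero] at key
    rw [intervalIntegral.integral_const_mul, intervalIntegral.integral_sub,
      intervalIntegral.integral_const_mul, intervalIntegral.integral_const_mul] at key
    · have := (mul_eq_zero.1 key).resolve_left I_ne_zero
      exact sub_eq_zero.1 this
    · exact (continuous_const.mul (cont_int hρ _)).intervalIntegrable _ _
    · exact (continuous_const.mul (cont_int hρ _)).intervalIntegrable _ _
  · intro a ha
    have hc : 0 < Real.cos a := Real.cos_pos_of_mem_Ioo ha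
    have d0 : HasDerivAt (fun a : ℝ => 2 * Real.cos a) (2 * (-Real.sin a)) a :=
      (Real.hasDerivAt_cos a).const_mul 2
    have d1 := HasDerivAt.scomp a (hasDerivAt_ofReal_cpow_const (x := 2 * Real.cos a) (by positivity) hne) d0
    have d2 : HasDerivAt (fun a : ℝ => cexp (I * k * a)) (cexp (I * k * a) * (I * k * 1)) a := by
      apply HasDerivAt.cexp
      exact (ofRealCLM.hasDerivAt (x := a)).const_mul (I * k)
    have d3 := d1.mul d2
    refine d3.congr_deriv ?_
    have e1 : (Real.cos a : ℂ) = (cexp (I * a) + cexp (-(I * a))) / 2 := by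
      push_cast
      rw [Complex.cos]
      ring_nf
    have e3 : (Real.sin a : ℂ) = (cexp (-(I * a)) - cexp (I * a)) * I / 2 := by
      push_cast
      rw [Complex.sin]
      ring_nf
    have h : ((2 * Real.cos a : ℝ) : ℂ) ≠ 0 := by
      exact_mod_cast (by positivity)
    have e2 : ((2 * Real.cos a : ℝ) : ℂ) ^ (ρ + 1)
      = ((2 * Real.cos a : ℝ) : ℂ) ^ ρ * (2 * (Real.cos a : ℂ)) := by
      rw [cpow_add _ _ h, cpow_one, ofReal_mul]
      simp
    simp only [Function.comp, real_smul, add_sub_cancel_right]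
    rw [e2]
    generalize ((2 * Real.cos a : ℝ) : ℂ) ^ ρ = X
    rw [ofReal_mul, ofReal_neg, e1, e3]
    push_cast
    rw [show I * ((k : ℂ) + 1) * a = I * k * a + I * a by ring,
      show I * ((k : ℂ) - 1) * a = I * k * a + -(I * a) by ring, exp_add, exp_add]
    ring
  · exact (continuous_const.mul ((continuous_const.mul (cont_int hρ _)).sub
      (continuous_const.mul (cont_int hρ _)))).intervalIntegrable _ _

lemma JJ_zero {ρ : ℂ} (hρ : 0 < ρ.re) : JJ ρ 0 = Real.pi * cc ρ 0 := by
  have hpi := Real.pi_pos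
  have hne : ρ ≠ 0 := by
    rintro rfl
    simp at hρ
  have hu : 0 < ((ρ + 1) / 2).re := by
    rw [show ((ρ + 1) / 2) = (1 / 2 : ℝ) * (ρ + 1) by push_cast; ring, re_ofReal_mul]
    simp; linarith
  set u := (ρ + 1) / 2 with hu_def
  have hcos : ∀ a ∈ Set.Icc (-(Real.pi / 2)) (Real.pi / 2), 0 ≤ Real.cos a :=
    fun a ha => Real.cos_nonneg_of_mem_Icc ha
  have eqq : ∀ a ∈ Set.Icc (-(Real.pi / 2)) (Real.pi / 2),
      (Real.cos a / 2) • (((((1 + Real.sin a) / 2 : ℝ) : ℂ)) ^ (u - 1) *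
        (1 - ((((1 + Real.sin a) / 2 : ℝ) : ℂ))) ^ (u - 1))
      = (4 : ℂ) ^ (-ρ) * (((2 * Real.cos a : ℝ) : ℂ) ^ ρ * cexp (I * (0 : ℤ) * a)) := by
    intro a ha
    have h0 := hcos a ha
    have hs1 := Real.sin_le_one a
    have hs2 := Real.neg_one_le_sin a
    rcases h0.eq_or_lt with h0 | h0
    · rw [← h0]
      simp [zero_cpow hne]
    · have hc2 : (0 : ℝ) ≤ Real.cos a / 2 := by positivity
      have hcn : ((Real.cos a / 2 : ℝ) : ℂ) ≠ 0 := by exact_mod_cast (by positivity)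
      rw [show (1 : ℂ) - (((1 + Real.sin a) / 2 : ℝ) : ℂ) = (((1 - Real.sin a) / 2 : ℝ) : ℂ) by
        push_cast; ring]
      rw [← mul_cpow_ofReal_nonneg (by linarith) (by linarith), ← ofReal_mul,
        show (1 + Real.sin a) / 2 * ((1 - Real.sin a) / 2) = (Real.cos a / 2) * (Real.cos a / 2) by
          nlinarith [Real.sin_sq_add_cos_sq a], ofReal_mul, mul_cpow_ofReal_nonneg hc2 hc2,
        show 2 * Real.cos a = 4 * (Real.cos a / 2) by ring, ofReal_mul,
        mul_cpow_ofReal_nonneg (by norm_num) hc2, real_smul]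
      have : ((4 : ℝ) : ℂ) = 4 := by norm_num
      rw [this, ← mul_assoc, ← mul_assoc, ← mul_assoc, ← cpow_add _ _ (by norm_num), neg_add_cancel, cpow_zero]
      have h3 : ρ = 1 + (u - 1) + (u - 1) := by rw [hu_def]; ring
      conv_rhs => rw [h3, cpow_add _ _ hcn, cpow_add _ _ hcn, cpow_one]
      simp
  have key := intervalIntegral.integral_deriv_smul_comp''' (a := -(Real.pi / 2)) (b := Real.pi / 2)
    (f := fun a : ℝ => (1 + Real.sin a) / 2) (f' := fun a => Real.cos a / 2)
    (g := fun x : ℝ => (x : ℂ) ^ (u - 1) * (1 - (x : ℂ)) ^ (u - 1)) (by fun_prop) ?_ ?_ ?_ ?_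
  · have e : ∫ a in (-(Real.pi / 2))..(Real.pi / 2), (Real.cos a / 2) •
        ((fun x : ℝ => (x : ℂ) ^ (u - 1) * (1 - (x : ℂ)) ^ (u - 1)) ∘
          fun a : ℝ => (1 + Real.sin a) / 2) a = (4 : ℂ) ^ (-ρ) * JJ ρ 0 := by
      rw [JJ, ← intervalIntegral.integral_const_mul]
      apply intervalIntegral.integral_congr
      intro a ha
      rw [Set.uIcc_of_le (by linarith)] at ha
      exact eqq a ha
    rw [e] at key
    simp only [Real.sin_neg, Real.sin_pi_div_two] at key
    norm_num at key
    have hB : (∫ x in (0:ℝ)..1, (x : ℂ) ^ (u - 1) * (1 - (x : ℂ)) ^ (u - 1)) = betaIntegral u u := rfl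
    rw [hB] at key
    have hG := Gamma_mul_Gamma_eq_betaIntegral hu hu
    have hD := Gamma_mul_Gamma_add_half u
    rw [show 2 * u = ρ + 1 by rw [hu_def]; ring] at hD
    rw [show u + u = ρ + 1 by rw [hu_def]; ring] at hG
    rw [show u + 1 / 2 = 1 + ρ / 2 by rw [hu_def]; ring, show 1 - (ρ + 1) = -ρ by ring] at hD
    have hg1 : Gamma (ρ + 1) ≠ 0 := Gamma_ne_zero_of_re_pos (by simp; linarith)
    have hg2 : Gamma (1 + ρ / 2) ≠ 0 := Gamma_ne_zero_of_re_pos (by simp; linarith)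
    have h4 : (4 : ℂ) ^ (-ρ) = 2 ^ (-ρ) * 2 ^ (-ρ) := by
      have := mul_cpow_ofReal_nonneg (a := 2) (b := 2) (by norm_num) (by norm_num) (-ρ)
      norm_num at this
      exact this
    have h2 : (2 : ℂ) ^ (-ρ) ≠ 0 := by simp [cpow_eq_zero_iff]
    have hsq : ((√Real.pi : ℝ) : ℂ) * ((√Real.pi : ℝ) : ℂ) = Real.pi := by
      rw [← ofReal_mul, Real.mul_self_sqrt hpi.le]
    rw [← key, h4] at hG
    unfold cc
    simp only [Int.cast_zero, add_zero, sub_zero]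
    have : Gamma (ρ + 1) * (2 ^ (-ρ) * 2 ^ (-ρ)) * (JJ ρ 0 * (Gamma (1 + ρ / 2) * Gamma (1 + ρ / 2)))
      = Gamma (ρ + 1) * (2 ^ (-ρ) * 2 ^ (-ρ)) * (Real.pi * Gamma (ρ + 1)) := by
      rw [← hsq]
      linear_combination (-(Gamma (1 + ρ / 2) * Gamma (1 + ρ / 2))) * hG + (Gamma u * Gamma (1 + ρ / 2) + Gamma (ρ + 1) * 2 ^ (-ρ) * (√Real.pi : ℝ)) * hD
    have := mul_left_cancel₀ (by positivity) this
    generalize Gamma (1 + ρ / 2) = G at *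
    rw [← mul_assoc, ← this]
    field_simp
  · intro x hx
    exact (((Real.hasDerivAt_sin x).const_add 1).div_const 2).hasDerivWithinAt
  · rintro _ ⟨a, ha, rfl⟩
    rw [min_eq_left (by linarith), max_eq_right (by linarith)] at ha
    have hc := Real.cos_pos_of_mem_Ioo ha
    have hs := Real.sin_sq_add_cos_sq a
    have h1 : 0 < 1 + Real.sin a := by nlinarith [Real.neg_one_le_sin a]
    have h2 : 0 < 1 - Real.sin a := by nlinarith [Real.sin_le_one a]
    apply ContinuousAt.continuousWithinAt
    apply ContinuousAt.mul
    · exact continuousAt_ofReal_cpow_const _ _ (Or.inr (show (0:ℝ) < (1 + Real.sin a) / 2 by linarith).ne')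
    · have h := ContinuousAt.comp (f := fun x : ℝ => 1 - x) (g := fun x : ℝ => (x : ℂ) ^ (u - 1))
        (x := (1 + Real.sin a) / 2)
        (continuousAt_ofReal_cpow_const _ _ (Or.inr (show (0:ℝ) < 1 - (1 + Real.sin a) / 2 by linarith).ne')) (by fun_prop)
      simpa [Function.comp_def] using h
  · have h := betaIntegral_convergent hu hu
    rw [intervalIntegrable_iff_integrableOn_Icc_of_le zero_le_one] at h
    refine h.mono_set ?_
    rintro _ ⟨a, ha, rfl⟩
    constructor <;> simp only [] <;> linarith [Real.neg_one_le_sin a, Real.sin_le_one a]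
  · rw [Set.uIcc_of_le (by linarith)]
    have h := ((cont_int hρ 0).const_mul ((4 : ℂ) ^ (-ρ))).continuousOn.integrableOn_Icc
      (a := -(Real.pi / 2)) (b := Real.pi / 2) (μ := volume)
    refine h.congr_fun ?_ measurableSet_Icc
    intro a ha
    exact (eqq a ha).symm

lemma JJ_one {ρ : ℂ} (hρ : 0 < ρ.re) : JJ ρ 1 = Real.pi * cc ρ 1 := by
  have h := JJ_pascal hρ 0
  have hn := JJ_neg ρ 1
  have hz := JJ_zero (ρ := ρ + 1) (by simp; linarith)
  rw [zero_add, zero_sub, hn, hz] at h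
  have hne : ρ + 1 ≠ 0 := by
    intro h
    have := congrArg re h
    simp at this
    linarith
  have : cc (ρ + 1) 0 = 2 * cc ρ 1 := by
    unfold cc
    have h1 := one_div_Gamma_eq_self_mul_one_div_Gamma_add_one ((ρ + 1) / 2)
    rw [Gamma_add_one _ hne]
    push_cast
    rw [show 1 + (ρ - 1) / 2 = (ρ + 1) / 2 by ring, h1, add_zero, sub_zero, add_comm 1 ((ρ + 1) / 2)]
    ring
  rw [this] at h
  linear_combination (-1 / 2 : ℂ) * h

lemma ne_aux {ρ : ℂ} (hρ : 0 < ρ.re) (n : ℕ) : ρ + 1 + n ≠ 0 := by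
  intro h
  have := congrArg re h
  simp at this
  have : (0 : ℝ) ≤ n := Nat.cast_nonneg n
  linarith

lemma JJ_nat {ρ : ℂ} (hρ : 0 < ρ.re) (n : ℕ) :
    JJ ρ n = Real.pi * cc ρ n ∧ JJ ρ (n + 1 : ℕ) = Real.pi * cc ρ (n + 1 : ℕ) := by
  induction n with
  | zero => exact ⟨by simpa using JJ_zero hρ, by simpa using JJ_one hρ⟩
  | succ n ih =>
    refine ⟨ih.2, ?_⟩
    have h1 := JJ_rec hρ ((n + 1 : ℕ) : ℤ)
    have h2 := cc_rec ρ ((n + 1 : ℕ) : ℤ)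
    have e : (((n + 1 : ℕ) : ℤ) - 1) = n := by push_cast; ring
    rw [e] at h1 h2
    rw [ih.1] at h1
    have h0 := ne_aux hρ (n + 1)
    rw [Int.cast_natCast] at h1 h2
    rw [Nat.cast_add (n + 1) 1, Nat.cast_one]
    apply mul_left_cancel₀ h0
    linear_combination h1 - Real.pi * h2

lemma JJ_eq {ρ : ℂ} (hρ : 0 < ρ.re) (k : ℤ) : JJ ρ k = Real.pi * cc ρ k := by
  obtain ⟨n, rfl | rfl⟩ := k.eq_nat_or_neg
  · exact (JJ_nat hρ n).1
  · rw [JJ_neg, cc_neg]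
    exact (JJ_nat hρ n).1

lemma ineq_aux {ρ : ℂ} (hρ : 0 < ρ.re) (x : ℝ)
    (hx : ρ.re + 1 + ρ.im ^ 2 * (ρ.re + 2) / ρ.re ≤ x) :
    (x + 2) * ‖ρ - x‖ ≤ (x - ρ.re) * ‖ρ + 2 + x‖ := by
  set T := ρ.im ^ 2 * (ρ.re + 2) / ρ.re with hT
  have hT0 : 0 ≤ T := by positivity
  have hTs : T * ρ.re = ρ.im ^ 2 * (ρ.re + 2) := by
    rw [hT]; field_simp
  have hx1 : 0 ≤ x - ρ.re := by linarith
  have hx2 : 0 ≤ x + 2 := by linarith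
  apply le_of_sq_le_sq _ (by positivity)
  rw [mul_pow, mul_pow, ← normSq_eq_norm_sq, ← normSq_eq_norm_sq, normSq_apply, normSq_apply]
  simp only [sub_re, sub_im, add_re, add_im, ofReal_re, ofReal_im, re_ofNat, im_ofNat, add_zero, sub_zero]
  generalize ρ.re = σ at *
  generalize ρ.im = τ at *
  have hy : T ≤ (x - σ) ^ 2 := by nlinarith
  have h1 : τ ^ 2 * (σ + 2) ≤ (x - σ) ^ 2 * σ := by
    rw [← hTs]; exact mul_le_mul_of_nonneg_right hy hρ.le
  have h2 : τ ^ 2 * (σ + 2) * (2 * x + 4 + σ) ≤ (x - σ) ^ 2 * σ * (2 * x + 4 + σ) :=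
    mul_le_mul_of_nonneg_right h1 (by linarith)
  have h3 : 0 ≤ τ ^ 2 * (σ + 2) * (2 + 2 * σ) := by positivity
  nlinarith

lemma cc_summable_large {ρ : ℂ} (hρ : 0 < ρ.re) (k₀ : ℤ)
    (hk : ρ.re + 1 + ρ.im ^ 2 * (ρ.re + 2) / ρ.re ≤ k₀) :
    Summable (fun n : ℕ => ‖cc ρ (k₀ + 2 * n)‖) := by
  have hT0 : 0 ≤ ρ.im ^ 2 * (ρ.re + 2) / ρ.re := by positivity
  have step : ∀ n : ℕ, ρ.re * ‖cc ρ (k₀ + 2 * n)‖ ≤ (k₀ + 2 * n : ℝ) * ‖cc ρ (k₀ + 2 * n)‖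
      - (k₀ + 2 * (n + 1 : ℕ) : ℝ) * ‖cc ρ (k₀ + 2 * (n + 1 : ℕ))‖ := by
    intro n
    have hn : (0 : ℝ) ≤ n := Nat.cast_nonneg n
    have h1 := ineq_aux hρ (k₀ + 2 * n) (by linarith)
    have h2 := congrArg norm (cc_rec ρ (k₀ + 2 * n + 1))
    rw [norm_mul, norm_mul] at h2
    rw [show k₀ + 2 * (n : ℤ) + 1 + 1 = k₀ + 2 * ((n + 1 : ℕ) : ℤ) by push_cast; ring,
      show k₀ + 2 * (n : ℤ) + 1 - 1 = k₀ + 2 * n by ring] at h2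
    push_cast at h1 h2 ⊢
    rw [show ρ + 1 + ((k₀ : ℂ) + 2 * n + 1) = ρ + 2 + (k₀ + 2 * n) by ring,
      show ρ + 1 - ((k₀ : ℂ) + 2 * n + 1) = ρ - (k₀ + 2 * n) by ring] at h2
    have hpos : 0 < ‖ρ + 2 + ((k₀ : ℂ) + 2 * n)‖ := by
      rw [norm_pos_iff]
      intro h
      have := congrArg re h
      simp at this
      linarith
    have hB := norm_nonneg (cc ρ (k₀ + 2 * n))
    generalize ‖cc ρ (k₀ + 2 * n)‖ = B at *
    generalize ‖cc ρ (k₀ + 2 * (n + 1))‖ = B' at *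
    have : ‖ρ + 2 + ((k₀ : ℂ) + 2 * n)‖ * ((k₀ + 2 * n + 2) * B')
        ≤ ‖ρ + 2 + ((k₀ : ℂ) + 2 * n)‖ * ((k₀ + 2 * n - ρ.re) * B) := by
      have := mul_le_mul_of_nonneg_right h1 hB
      nlinarith
    have := le_of_mul_le_mul_left this hpos
    nlinarith
  apply summable_of_sum_range_le (c := (k₀ * ‖cc ρ k₀‖) / ρ.re) (fun _ => norm_nonneg _)
  intro N
  rw [le_div_iff₀ hρ, mul_comm, Finset.mul_sum]
  refine (Finset.sum_le_sum (fun n _ => step n)).trans ?_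
  have := Finset.sum_range_sub' (fun n : ℕ => (k₀ + 2 * n : ℝ) * ‖cc ρ (k₀ + 2 * n)‖) N
  rw [this]
  simp
  have : (0 : ℝ) ≤ N := Nat.cast_nonneg N
  have : (0 : ℝ) ≤ k₀ := by linarith
  positivity

lemma cc_summable {ρ : ℂ} (hρ : 0 < ρ.re) (k₀ : ℤ) : Summable (fun n : ℕ => ‖cc ρ (k₀ + 2 * n)‖) := by
  obtain ⟨N, hN⟩ := exists_nat_ge (ρ.re + 1 + ρ.im ^ 2 * (ρ.re + 2) / ρ.re - k₀)
  have hN0 : (0 : ℝ) ≤ N := Nat.cast_nonneg N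
  rw [← summable_nat_add_iff N]
  have := cc_summable_large hρ (k₀ + 2 * N) (by push_cast; linarith)
  convert! this using 4
  push_cast
  ring

lemma cc_summable_int {ρ : ℂ} (hρ : 0 < ρ.re) (k₀ : ℤ) : Summable (fun n : ℤ => ‖cc ρ (2 * n + k₀)‖) := by
  apply Summable.of_nat_of_neg
  · convert! cc_summable hρ k₀ using 4
    ring
  · convert! cc_summable hρ (-k₀) using 3
    rw [← cc_neg]
    congr 1
    ring

noncomputable def hh (ρ : ℂ) (γ : ℕ) (x : ℝ) : ℂ := ((|x| : ℝ) : ℂ) ^ ρ * ((Real.sign x ^ γ : ℝ) : ℂ)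

lemma hh_mul (ρ : ℂ) (γ : ℕ) (x y : ℝ) : hh ρ γ (x * y) = hh ρ γ x * hh ρ γ y := by
  have : Real.sign (x * y) = Real.sign x * Real.sign y := by
    rcases lt_trichotomy x 0 with h | h | h <;> rcases lt_trichotomy y 0 with h' | h' | h' <;>
    simp [h, h', Real.sign_of_neg, Real.sign_of_pos, mul_pos_of_neg_of_neg, mul_neg_of_neg_of_pos, mul_neg_of_pos_of_neg]
  unfold hh
  rw [this, abs_mul, ofReal_mul, mul_cpow_ofReal_nonneg (abs_nonneg _) (abs_nonneg _), mul_pow,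
    ofReal_mul]
  ring

lemma hh_neg (ρ : ℂ) (γ : ℕ) (x : ℝ) : hh ρ γ (-x) = (-1) ^ γ * hh ρ γ x := by
  unfold hh
  rw [abs_neg, Real.sign_neg, neg_pow]
  push_cast
  ring

lemma hh_nonneg {ρ : ℂ} (hρ : 0 < ρ.re) (γ : ℕ) {x : ℝ} (hx : 0 ≤ x) : hh ρ γ x = (x : ℂ) ^ ρ := by
  unfold hh
  rcases hx.eq_or_lt with h | h
  · rw [← h]
    have : ρ ≠ 0 := by
      rintro rfl
      simp at hρ
    simp [this]
  · simp [Real.sign_of_pos h, abs_of_pos h]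

lemma hh_cont {ρ : ℂ} (hρ : 0 < ρ.re) (γ : ℕ) : Continuous (hh ρ γ) := by
  have h1 : ContinuousOn (hh ρ γ) (Set.Ici 0) :=
    (continuous_ofReal_cpow_const hρ).continuousOn.congr (fun x hx => hh_nonneg hρ γ hx)
  have h2 : ContinuousOn (hh ρ γ) (Set.Iic 0) := by
    have : ContinuousOn (fun x : ℝ => (-1) ^ γ * ((-x : ℝ) : ℂ) ^ ρ) (Set.Iic 0) :=
      (continuous_const.mul ((continuous_ofReal_cpow_const hρ).comp continuous_neg)).continuousOn
    refine this.congr (fun x hx => ?_)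
    have hx' : 0 ≤ -x := by simpa using hx
    change hh ρ γ x = (-1) ^ γ * ((-x : ℝ) : ℂ) ^ ρ
    rw [← hh_nonneg hρ γ hx', ← hh_neg, neg_neg]
  rw [← continuousOn_univ, ← Set.Iic_union_Ici (a := (0 : ℝ))]
  exact h2.union_of_isClosed h1 isClosed_Iic isClosed_Ici

lemma one_dim {ρ : ℂ} (hρ : 0 < ρ.re) (γ : ℕ) (a : ℝ) :
    HasSum (fun n : ℤ => cc ρ (2 * n + γ) * cexp (I * ((2 * n + γ : ℤ) : ℂ) * a))
      (hh ρ γ (2 * Real.cos a)) := by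
  have : Fact (0 < Real.pi) := ⟨Real.pi_pos⟩
  have hpi : (Real.pi : ℂ) ≠ 0 := by exact_mod_cast Real.pi_pos.ne'
  set g : ℝ → ℂ := fun a => hh ρ γ (2 * Real.cos a) * cexp (-(I * γ * a)) with hg
  have hper : Function.Periodic g Real.pi := by
    intro x
    simp only [hg]
    rw [Real.cos_add_pi, mul_neg, hh_neg]
    push_cast
    rw [show -(I * γ * ((x : ℂ) + Real.pi)) = -(I * γ * x) + γ * (-(Real.pi * I)) by ring, exp_add,
      exp_nat_mul, exp_neg (Real.pi * I), exp_pi_mul_I, mul_mul_mul_comm, mul_comm ((-1 : ℂ) ^ γ)]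
    have : (-1 : ℂ) ^ γ * ((-1 : ℂ)⁻¹) ^ γ = 1 := by
      rw [← mul_pow]; norm_num
    linear_combination (hh ρ γ (2 * Real.cos x) * cexp (-(I * γ * x))) * this
  have hgc : Continuous g :=
    ((hh_cont hρ γ).comp (by fun_prop : Continuous fun a : ℝ => 2 * Real.cos a)).mul (by fun_prop)
  let F : C(AddCircle Real.pi, ℂ) := ⟨hper.lift, continuous_coinduced_dom.mpr hgc⟩
  have hF : ∀ x : ℝ, F (x : AddCircle Real.pi) = g x := fun x => hper.lift_coe x
  have hco : ∀ n : ℤ, fourierCoeff F n = cc ρ (2 * n + γ) := by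
    intro n
    rw [fourierCoeff_eq_intervalIntegral _ n (-(Real.pi / 2)),
      show -(Real.pi / 2) + Real.pi = Real.pi / 2 by ring]
    have : ∫ x in (-(Real.pi / 2))..(Real.pi / 2), (fourier (-n)) (x : AddCircle Real.pi) • F x
        = JJ ρ (-(2 * n + γ)) := by
      unfold JJ
      apply intervalIntegral.integral_congr
      intro x hx
      rw [Set.uIcc_of_le (by linarith [Real.pi_pos])] at hx
      have hc : 0 ≤ Real.cos x := Real.cos_nonneg_of_mem_Icc hx
      simp only [hF, hg, fourier_coe_apply, smul_eq_mul]
      rw [hh_nonneg hρ γ (by positivity), mul_left_comm, ← exp_add]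
      congr 2
      push_cast
      field_simp
      ring
    rw [this, JJ_neg, JJ_eq hρ, real_smul]
    push_cast
    field_simp
  have hs : Summable (fourierCoeff F) := by
    rw [show fourierCoeff F = fun n => cc ρ (2 * n + γ) from funext hco]
    exact (cc_summable_int hρ γ).of_norm
  have := (has_pointwise_sum_fourier_series_of_summable hs (a : AddCircle Real.pi)).mul_right
    (cexp (I * γ * a))
  rw [hF] at this
  convert! this using 1
  · ext n
    rw [hco, fourier_coe_apply, smul_eq_mul, mul_assoc (cc _ _), ← exp_add]
    congr 2
    push_cast
    field_simp
  · simp only [hg]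
    rw [mul_assoc, ← exp_add]
    simp

lemma two_dim {ρ : ℂ} (hρ : 0 < ρ.re) (γ : ℕ) (φ ψ : ℝ) :
    HasSum (fun p : ℤ × ℤ => if p.1 % 2 = (p.2 + γ) % 2 then
        (2 : ℂ) ^ (-ρ) * (cc ρ (p.1 + p.2) * cc ρ (p.1 - p.2) * (cexp (I * (p.1 * φ)) * cexp (I * (p.2 * ψ)))) else 0)
      (hh ρ γ (Real.cos φ + Real.cos ψ)) := by
  set e : ℤ × ℤ → ℤ × ℤ := fun q => (q.1 + q.2 + γ, q.1 - q.2) with he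
  have hinj : Function.Injective e := by
    rintro ⟨a, b⟩ ⟨c, d⟩ h
    simp only [he, Prod.mk.injEq] at h
    ext <;> simp only [] <;> omega
  rw [← hinj.hasSum_iff]
  · have ha := one_dim hρ γ ((φ + ψ) / 2)
    have hb := one_dim hρ γ ((φ - ψ) / 2)
    obtain ⟨f, hf⟩ : ∃ f : ℝ → ℤ → ℂ, ∀ a n, f a n = cc ρ (2 * n + γ) * cexp (I * ((2 * n + γ : ℤ) : ℂ) * a) :=
      ⟨_, fun _ _ => rfl⟩
    have hna : ∀ a : ℝ, Summable (fun n : ℤ => ‖f a n‖) := by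
      intro a
      convert! cc_summable_int hρ γ using 2 with n
      rw [hf, norm_mul, show I * ((2 * n + γ : ℤ) : ℂ) * a = (((2 * n + γ : ℤ) : ℝ) * a : ℝ) * I by
        push_cast; ring, norm_exp_ofReal_mul_I, mul_one]
    simp only [← hf] at ha hb
    have hsm := summable_mul_of_summable_norm (hna ((φ + ψ) / 2)) (hna ((φ - ψ) / 2))
    have hab := (HasSum.mul ha hb hsm).mul_left ((2 : ℂ) ^ (-ρ))
    convert! hab using 1
    · ext ⟨n, m⟩
      simp only [Function.comp, he, hf]
      rw [if_pos (by omega), show n + m + (γ : ℤ) + (n - m) = 2 * n + γ by ring,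
        show n + m + (γ : ℤ) - (n - m) = 2 * m + γ by ring, mul_mul_mul_comm (cc ρ (2 * n + γ)) (cexp (I * ((2 * n + γ : ℤ) : ℂ) * _)),
        ← exp_add, ← exp_add]
      congr 3
      push_cast
      ring
    · rw [← hh_mul, Real.cos_add_cos]
      rw [show 2 * Real.cos ((φ + ψ) / 2) * (2 * Real.cos ((φ - ψ) / 2))
        = 2 * (2 * Real.cos ((φ + ψ) / 2) * Real.cos ((φ - ψ) / 2)) by ring, hh_mul ρ γ 2,
        hh_nonneg hρ γ (by norm_num : (0 : ℝ) ≤ 2), ← mul_assoc]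
      push_cast
      rw [← cpow_add _ _ (by norm_num)]
      simp
  · rintro ⟨a, b⟩ hx
    rw [if_neg]
    simp only []
    intro h
    apply hx
    refine ⟨((a + b - γ) / 2, (a - b - γ) / 2), ?_⟩
    simp only [he, Prod.mk.injEq]
    omega
end S11

theorem stmt11 (ρ : ℂ) (hρ : 0 < ρ.re) (γ : ℕ) (hγ : γ = 0 ∨ γ = 1) (φ ψ : ℝ) :
    HasSum
      (fun p : ℤ × ℤ =>
        if p.1 % 2 = (p.2 + γ) % 2 then
          (2 : ℂ) ^ (-ρ) * Complex.Gamma (ρ + 1) ^ 2 *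
            ((Real.cos ((p.1 : ℝ) * φ) : ℂ) * (Real.cos ((p.2 : ℝ) * ψ) : ℂ) /
              (Complex.Gamma (1 + (ρ + (p.1 : ℂ) + (p.2 : ℂ)) / 2) *
                Complex.Gamma (1 + (ρ + (p.1 : ℂ) - (p.2 : ℂ)) / 2) *
                Complex.Gamma (1 + (ρ - (p.1 : ℂ) + (p.2 : ℂ)) / 2) *
                Complex.Gamma (1 + (ρ - (p.1 : ℂ) - (p.2 : ℂ)) / 2)))
        else 0)
      (((|Real.cos φ + Real.cos ψ| : ℝ) : ℂ) ^ ρ *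
        (((Real.sign (Real.cos φ + Real.cos ψ)) ^ γ : ℝ) : ℂ)) := by
  have h1 := S11.two_dim hρ γ φ ψ
  have h2 := S11.two_dim hρ γ φ (-ψ)
  have h3 := S11.two_dim hρ γ (-φ) ψ
  have h4 := S11.two_dim hρ γ (-φ) (-ψ)
  rw [Real.cos_neg] at h2 h3
  rw [Real.cos_neg, Real.cos_neg] at h4
  have h := ((h1.add h2).add (h3.add h4)).mul_left (1 / 4 : ℂ)
  convert! h using 1
  · ext ⟨l, m⟩
    simp only []
    split_ifs with hlm
    · have hc : ∀ (k : ℤ) (x : ℝ), ((Real.cos ((k : ℝ) * x) : ℝ) : ℂ)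
          = (Complex.exp (Complex.I * (k * x)) + Complex.exp (Complex.I * (k * (-x : ℝ)))) / 2 := by
        intro k x
        push_cast
        rw [Complex.cos]
        ring_nf
      rw [hc, hc]
      unfold S11.cc
      push_cast
      rw [show 1 + (ρ + ((l : ℂ) + m)) / 2 = 1 + (ρ + l + m) / 2 by ring,
        show 1 + (ρ + ((l : ℂ) - m)) / 2 = 1 + (ρ + l - m) / 2 by ring,
        show 1 + (ρ - ((l : ℂ) + m)) / 2 = 1 + (ρ - l - m) / 2 by ring,
        show 1 + (ρ - ((l : ℂ) - m)) / 2 = 1 + (ρ - l + m) / 2 by ring,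
        div_eq_mul_inv (_ * _) (_ * _), mul_inv, mul_inv, mul_inv]
      ring
    · simp
  · simp only [S11.hh]
    ring
end

section
/- Suppose λ, μ, ν ∈ ℂ with Re λ > −1/2, Re μ > −1/2 and Re ν > 0. Then ∫_{−1}^1 ∫_{−1}^1 |s − t|^{2ν} (1 − s²)^{λ−1/2} (1 − t²)^{μ−1/2} ds dt = π^{1/2} Γ(λ + 1/2) Γ(μ + 1/2) Γ(ν + 1/2) Γ(λ + μ + 2ν + 1) / (Γ(λ + ν + 1) Γ(μ + ν + 1) Γ(λ + μ + ν + 1)). -/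
open MeasureTheory intervalIntegral

noncomputable section S13

/-- weight -/
def sW (A : ℂ) (s : ℝ) : ℂ := ((1 - s ^ 2 : ℝ) : ℂ) ^ A
/-- kernel -/
def sK (k : ℂ) (u : ℝ) : ℂ := ((|u| : ℝ) : ℂ) ^ k
/-- base measure -/
def sρ : Measure ℝ := volume.restrict (Set.Ioo (-1) 1)

instance sρ_fin : IsFiniteMeasure sρ := by
  unfold sρ; infer_instance

lemma sρ_ae : ∀ᵐ s ∂sρ, s ∈ Set.Ioo (-1:ℝ) 1 := ae_restrict_mem measurableSet_Ioo

lemma s_int_eq (f : ℝ → ℂ) : ∫ s in (-1:ℝ)..1, f s = ∫ s, f s ∂sρ := by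
  rw [intervalIntegral.integral_of_le (by norm_num), sρ, integral_Ioc_eq_integral_Ioo]

lemma sW_meas (A : ℂ) : Measurable (sW A) := by unfold sW; fun_prop
lemma sK_meas (A : ℂ) : Measurable (sK A) := by unfold sK; fun_prop

lemma sW_norm (A : ℂ) {s : ℝ} (hs : s ∈ Set.Ioo (-1:ℝ) 1) : ‖sW A s‖ = (1 - s^2) ^ A.re := by
  unfold sW
  rw [Complex.norm_cpow_eq_rpow_re_of_pos]
  nlinarith [hs.1, hs.2]

lemma sW_succ (A : ℂ) {s : ℝ} (hs : s ∈ Set.Ioo (-1:ℝ) 1) :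
    sW (A + 1) s = (1 - (s:ℂ)^2) * sW A s := by
  unfold sW
  have h : (0:ℝ) < 1 - s^2 := by nlinarith [hs.1, hs.2]
  rw [Complex.cpow_add _ _ (by exact_mod_cast h.ne'), Complex.cpow_one, mul_comm]
  push_cast; ring

lemma sW_integrable {A : ℂ} (hA : -1 < A.re) : Integrable (sW A) sρ := by
  have h1 : IntervalIntegrable (fun x : ℝ => (x:ℂ) ^ A) volume 1 0 :=
    intervalIntegral.intervalIntegrable_cpow' hA
  have h2 := h1.comp_sub_left 1
  simp only [sub_self, sub_zero] at h2
  have h3 : IntervalIntegrable (sW A) volume 0 1 := by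
    have h4 : ContinuousOn (fun x : ℝ => ((1 + x : ℝ) : ℂ) ^ A) (Set.uIcc 0 1) := by
      rw [Set.uIcc_of_le zero_le_one]
      apply ContinuousOn.cpow_const
      · fun_prop
      · intro x hx
        left
        rw [Complex.ofReal_re]
        linarith [hx.1]
    refine (h2.mul_continuousOn h4).congr ?_
    intro x hx
    rw [Set.uIoc_of_le zero_le_one] at hx
    simp only [sW]
    rw [← Complex.mul_cpow_ofReal_nonneg (by linarith [hx.2]) (by linarith [hx.1]),
      ← Complex.ofReal_mul]
    congr 2
    ring
  have h5 : IntervalIntegrable (sW A) volume (-1) 0 := by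
    have := (IntervalIntegrable.iff_comp_neg (f := sW A) (a := 0) (b := 1)).mp h3 |>.symm
    have e : (fun x => sW A (-x)) = sW A := by ext x; simp [sW]
    rw [e] at this
    simpa using this
  have := h5.trans h3
  rwa [intervalIntegrable_iff_integrableOn_Ioo_of_le (by norm_num)] at this

lemma sK_intervalIntegrable {k : ℂ} (hk : -1 < k.re) (a b : ℝ) :
    IntervalIntegrable (sK k) volume a b := by
  apply intervalIntegrable_of_even
  · intro x; simp [sK]
  · intro x hx
    refine (intervalIntegral.intervalIntegrable_cpow' hk).congr ?_
    intro y hy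
    rw [Set.uIoc_of_le hx.le] at hy
    simp [sK, abs_of_pos hy.1]
  · simp
  · simp

lemma sK_prod_integrable {k : ℂ} (hk : -1 < k.re) {g : ℝ → ℂ} (hg : Integrable g sρ) :
    Integrable (fun z : ℝ × ℝ => g z.2 * sK k (z.1 - z.2)) (sρ.prod sρ) := by
  have h1 : Integrable (Set.indicator (Set.Ioo (-1) 1) g) volume :=
    (integrable_indicator_iff measurableSet_Ioo).mpr hg
  have h2 : Integrable (Set.indicator (Set.Ioo (-2) 2) (sK k)) volume := by
    rw [integrable_indicator_iff measurableSet_Ioo]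
    exact (intervalIntegrable_iff_integrableOn_Ioo_of_le (by norm_num)).mp
      (sK_intervalIntegrable hk _ _)
  have h3 := h1.convolution_integrand (ContinuousLinearMap.mul ℂ ℂ) h2
  have h4 : sρ.prod sρ = (volume.prod volume).restrict (Set.Ioo (-1:ℝ) 1 ×ˢ Set.Ioo (-1:ℝ) 1) := by
    rw [sρ, Measure.prod_restrict]
  rw [h4]
  refine (h3.integrableOn (s := Set.Ioo (-1:ℝ) 1 ×ˢ Set.Ioo (-1:ℝ) 1)).congr ?_
  filter_upwards [ae_restrict_mem (measurableSet_Ioo.prod measurableSet_Ioo)] with z hz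
  obtain ⟨ha, hb⟩ := hz
  rw [ContinuousLinearMap.mul_apply', Set.indicator_of_mem hb, Set.indicator_of_mem]
  constructor <;> linarith [ha.1, ha.2, hb.1, hb.2]

lemma sρ2_ae : ∀ᵐ z ∂(sρ.prod sρ), z.1 ∈ Set.Ioo (-1:ℝ) 1 ∧ z.2 ∈ Set.Ioo (-1:ℝ) 1 := by
  have h4 : sρ.prod sρ = (volume.prod volume).restrict (Set.Ioo (-1:ℝ) 1 ×ˢ Set.Ioo (-1:ℝ) 1) := by
    rw [sρ, Measure.prod_restrict]
  rw [h4]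
  filter_upwards [ae_restrict_mem (measurableSet_Ioo.prod measurableSet_Ioo)] with z hz
  exact hz

lemma sK_norm_le {k : ℂ} (hk : 0 < k.re) {u c : ℝ} (hu : |u| ≤ c) : ‖sK k u‖ ≤ c ^ k.re := by
  unfold sK
  rw [Complex.norm_cpow_eq_rpow_re_of_nonneg (abs_nonneg _) hk.ne']
  exact Real.rpow_le_rpow (abs_nonneg _) hu hk.le

lemma sΦ_integrable {A B k : ℂ} (hA : -1 < A.re) (hB : -1 < B.re) (hk : 0 < k.re)
    (p : ℝ × ℝ → ℂ) (hp : Continuous p) :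
    Integrable (fun z : ℝ × ℝ => p z * (sW A z.1 * sW B z.2 * sK k (z.1 - z.2))) (sρ.prod sρ) := by
  obtain ⟨C, hC⟩ := ((isCompact_Icc (a := (-1:ℝ)) (b := 1)).prod
    (isCompact_Icc (a := (-1:ℝ)) (b := 1))).exists_bound_of_continuousOn hp.continuousOn
  have h := (sW_integrable hA).mul_prod (sW_integrable hB)
  have h2 := h.bdd_mul (f := fun z : ℝ × ℝ => p z * sK k (z.1 - z.2)) (c := C * 2 ^ k.re) ?_ ?_
  · refine h2.congr (Filter.Eventually.of_forall fun z => ?_)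
    simp only; ring
  · have := sK_meas k
    have := hp.measurable
    exact Measurable.aestronglyMeasurable (by fun_prop)
  · filter_upwards [sρ2_ae] with z hz
    rw [norm_mul]
    have h0 := hC z ⟨⟨hz.1.1.le, hz.1.2.le⟩, ⟨hz.2.1.le, hz.2.2.le⟩⟩
    refine mul_le_mul h0 (sK_norm_le hk ?_) (norm_nonneg _) ((norm_nonneg _).trans h0)
    rw [abs_le]; constructor <;> linarith [hz.1.1, hz.1.2, hz.2.1, hz.2.2]

/-- derivative of the kernel -/
def sK' (k : ℂ) (u : ℝ) : ℂ := k * ((u / |u| : ℝ) : ℂ) * sK (k - 1) u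

lemma sK'_meas (A : ℂ) : Measurable (sK' A) := by
  have := sK_meas (A - 1)
  unfold sK'; fun_prop

lemma sK_mul {k : ℂ} (hk : 0 < k.re) (u : ℝ) : (u : ℂ) * sK' k u = k * sK k u := by
  have hk0 : k ≠ 0 := by rintro rfl; simp at hk
  rcases eq_or_ne u 0 with rfl | hu
  · simp [sK, hk0]
  · unfold sK' sK
    have ha : (|u| : ℝ) ≠ 0 := abs_ne_zero.mpr hu
    have ha' : ((|u| : ℝ) : ℂ) ≠ 0 := by exact_mod_cast ha
    have h2 : (u:ℂ) * u = ((|u| : ℝ) : ℂ) * ((|u| : ℝ) : ℂ) := by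
      norm_cast; rw [abs_mul_abs_self]
    rw [Complex.cpow_sub _ _ ha', Complex.cpow_one]
    push_cast
    field_simp
    rw [pow_two, pow_two, h2]

lemma sK_deriv {k : ℂ} (hk : 0 < k.re) {u : ℝ} (hu : u ≠ 0) : HasDerivAt (sK k) (sK' k u) u := by
  have hk0 : k ≠ 0 := by rintro rfl; simp at hk
  have h1 := hasDerivAt_ofReal_cpow_const (abs_ne_zero.mpr hu) hk0
  have h2 := h1.scomp u (hasDerivAt_abs hu)
  have h3 : ((SignType.sign u : ℤ) : ℝ) = u / |u| := by
    rcases lt_or_gt_of_ne hu with h | h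
    · simp [h, abs_of_neg, div_neg, div_self hu]
    · simp [h, abs_of_pos, div_self hu]
  refine HasDerivAt.congr_deriv h2 ?_
  simp only [sK', sK, ← h3, Complex.real_smul]
  rcases lt_or_gt_of_ne hu with h | h <;> simp [h]

lemma sK_cont {k : ℂ} (hk : 0 < k.re) : Continuous (sK k) := by
  unfold sK
  exact (Complex.continuous_ofReal_cpow_const hk).comp continuous_abs

lemma sW_contOn {A : ℂ} (hA : 0 < A.re) : Continuous (sW A) := by
  unfold sW
  exact (Complex.continuous_ofReal_cpow_const hA).comp (by fun_prop : Continuous fun s : ℝ => 1 - s^2)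

lemma sW_deriv {A : ℂ} (hA : -1 < A.re) {s : ℝ} (hs : s ∈ Set.Ioo (-1:ℝ) 1) :
    HasDerivAt (sW (A + 1)) (-2 * (A + 1) * s * sW A s) s := by
  have hk0 : A + 1 ≠ 0 := by
    intro h
    have := congrArg Complex.re h
    simp at this; linarith
  have h : (1 - s^2:ℝ) ≠ 0 := by nlinarith [hs.1, hs.2]
  have h1 := hasDerivAt_ofReal_cpow_const h hk0
  have h2 := h1.scomp s (((hasDerivAt_id s).pow 2).const_sub 1)
  refine HasDerivAt.congr_deriv h2 ?_
  simp [sW]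
  ring

lemma sK'_norm_le (k : ℂ) (u : ℝ) : ‖sK' k u‖ ≤ ‖k * sK (k - 1) u‖ := by
  unfold sK'
  rw [norm_mul, norm_mul, norm_mul, Complex.norm_real]
  have : ‖u / |u|‖ ≤ 1 := by
    rw [norm_div, Real.norm_eq_abs, Real.norm_eq_abs, abs_abs]; exact div_self_le_one _
  have h0 := norm_nonneg k
  have h1 := norm_nonneg (sK (k-1) u)
  gcongr
  nlinarith

lemma sK'_integrable {k : ℂ} (hk : 0 < k.re) {m : ℝ → ℂ} (hm : Integrable m sρ)
    (p : ℝ × ℝ → ℂ) (hp : Continuous p) :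
    Integrable (fun z : ℝ × ℝ => p z * (m z.2 * sK' k (z.1 - z.2))) (sρ.prod sρ) := by
  obtain ⟨C, hC⟩ := ((isCompact_Icc (a := (-1:ℝ)) (b := 1)).prod
    (isCompact_Icc (a := (-1:ℝ)) (b := 1))).exists_bound_of_continuousOn hp.continuousOn
  have h := (sK_prod_integrable (k := k - 1) (by simpa using hk) hm).const_mul k
  have h1 : Integrable (fun z : ℝ × ℝ => (m z.2 * sK' k (z.1 - z.2))) (sρ.prod sρ) := by
    refine h.mono ?_ ?_
    · refine (hm.1.comp_snd).mul (Measurable.aestronglyMeasurable ?_)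
      have := sK'_meas k
      fun_prop
    · refine Filter.Eventually.of_forall fun z => ?_
      have := sK'_norm_le k (z.1 - z.2)
      rw [norm_mul] at this ⊢
      rw [norm_mul, norm_mul]
      nlinarith [norm_nonneg (m z.2)]
  refine h1.bdd_mul (c := C) hp.aestronglyMeasurable ?_
  filter_upwards [sρ2_ae] with z hz
  exact hC z ⟨⟨hz.1.1.le, hz.1.2.le⟩, ⟨hz.2.1.le, hz.2.2.le⟩⟩

/-- integration by parts in the first variable -/
lemma s_ibp {A B k : ℂ} (hA : -1 < A.re) (hB : -1 < B.re) (hk : 0 < k.re) (q c : ℝ → ℂ)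
    (hq : Continuous q) (hc : Continuous c) (d : ℂ) :
    Integrable (fun z : ℝ × ℝ =>
        (q z.2 * (-2 * (A + 1) * z.1 * (c z.2 + d * z.1) + d * (1 - (z.1:ℂ)^2))) *
          (sW A z.1 * sW B z.2 * sK k (z.1 - z.2))
        + (q z.2 * (c z.2 + d * z.1) * sW (A + 1) z.1) * (sW B z.2 * sK' k (z.1 - z.2)))
        (sρ.prod sρ) ∧ 
    ∫ z : ℝ × ℝ, (
        (q z.2 * (-2 * (A + 1) * z.1 * (c z.2 + d * z.1) + d * (1 - (z.1:ℂ)^2))) *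
          (sW A z.1 * sW B z.2 * sK k (z.1 - z.2))
        + (q z.2 * (c z.2 + d * z.1) * sW (A + 1) z.1) * (sW B z.2 * sK' k (z.1 - z.2)))
        ∂(sρ.prod sρ) = 0 := by
  have hcont : Continuous (sW (A + 1)) := sW_contOn (by simp; linarith)
  have hint := (sΦ_integrable hA hB hk
    (fun z => q z.2 * (-2 * (A + 1) * z.1 * (c z.2 + d * z.1) + d * (1 - (z.1:ℂ)^2)))
    (by fun_prop)).add (sK'_integrable hk (sW_integrable hB)
    (fun z => q z.2 * (c z.2 + d * z.1) * sW (A + 1) z.1) (by fun_prop))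
  refine ⟨hint, ?_⟩
  refine (integral_prod_symm _ hint).trans ?_
  rw [← integral_zero ℝ ℂ (μ := sρ)]
  apply MeasureTheory.integral_congr_ae
  filter_upwards [hint.prod_left_ae] with t ht
  have hint2 := ht
  rw [sρ, ← IntegrableOn, ← intervalIntegrable_iff_integrableOn_Ioo_of_le (by norm_num)] at hint2
  rw [← s_int_eq]
  have hKc := sK_cont hk
  have := integral_eq_of_hasDerivAt_off_countable_of_le
    (fun s : ℝ => q t * sW B t * (sW (A + 1) s * (c t + d * s) * sK k (s - t))) _
    (by norm_num : (-1:ℝ) ≤ 1) (Set.countable_singleton t)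
    (Continuous.continuousOn (by fun_prop)) ?_ hint2
  · refine this.trans ?_
    have hA0 : A + 1 ≠ 0 := by
      intro h
      have := congrArg Complex.re h
      simp at this; linarith
    simp [sW, hA0]
  · rintro s ⟨hs, hst⟩
    have hst' : s - t ≠ 0 := sub_ne_zero.mpr hst
    have e1 := sW_deriv hA hs
    have e2 : HasDerivAt (fun s : ℝ => c t + d * (s:ℂ)) d s := by
      simpa using ((hasDerivAt_id s).ofReal_comp.const_mul d).const_add (c t)
    have e3 : HasDerivAt (fun s : ℝ => sK k (s - t)) (sK' k (s - t)) s :=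
      (sK_deriv hk hst').comp_sub_const s t
    refine (((e1.mul e2).mul e3).const_mul (q t * sW B t)).congr_deriv ?_
    simp only [Pi.add_apply, Pi.mul_apply]
    rw [sW_succ A hs]
    ring

/-- moment functional -/
def sM (A B k : ℂ) (p : ℝ × ℝ → ℂ) : ℂ :=
  ∫ z : ℝ × ℝ, p z * (sW A z.1 * sW B z.2 * sK k (z.1 - z.2)) ∂(sρ.prod sρ)

lemma s_E1 {A B ν : ℂ} (hA : -1 < A.re) (hB : -1 < B.re) (hν : 0 < ν.re) :
    sM A B (2*ν) (fun z => (1 + 2 * ν) * (1 - (z.1:ℂ)^2)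
      - (2 + 2 * A) * ((z.1:ℂ)^2 - z.1 * z.2)) = 0 := by
  have hk : 0 < (2 * ν).re := by simpa using hν
  refine Eq.trans ?_ (s_ibp hA hB hk (fun _ => 1) (fun t => -t) (by fun_prop) (by fun_prop) 1).2
  apply MeasureTheory.integral_congr_ae
  filter_upwards [sρ2_ae] with z hz
  have h := sK_mul hk (z.1 - z.2)
  push_cast at h
  rw [sW_succ A hz.1]
  linear_combination (-(1 - (z.1:ℂ)^2) * sW A z.1 * sW B z.2) * h

lemma s_E3 {A B ν : ℂ} (hA : -1 < A.re) (hB : -1 < B.re) (hν : 0 < ν.re) :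
    sM A B (2*ν) (fun z => 1 - (3 + 2 * ν + 2 * A) * (z.1:ℂ)^2
      - (2 + 2 * ν + 2 * B) * (z.1 * z.2)) = 0 := by
  have hk : 0 < (2 * ν).re := by simpa using hν
  have h1 := s_ibp hA hB hk (fun _ => 1) (fun t => 0) (by fun_prop) (by fun_prop) 1
  have h2 := s_ibp hB hA hk (fun s => s) (fun t => 1) (by fun_prop) (by fun_prop) 0
  have h3 := h2.2
  rw [← integral_prod_swap] at h3
  have h4 := integral_add h1.1 h2.1.swap
  simp only [Function.comp_def] at h4
  rw [h1.2, h3, add_zero] at h4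
  refine Eq.trans ?_ h4
  apply MeasureTheory.integral_congr_ae
  filter_upwards [sρ2_ae] with z hz
  have h := sK_mul hk (z.1 - z.2)
  have e1 : sK (2*ν) (z.2 - z.1) = sK (2*ν) (z.1 - z.2) := by simp only [sK, abs_sub_comm]
  have e2 : sK' (2*ν) (z.2 - z.1) = - sK' (2*ν) (z.1 - z.2) := by
    simp only [sK', sK, abs_sub_comm z.2 z.1]
    rw [← neg_sub z.1 z.2, neg_div]
    push_cast; ring
  simp only [Prod.fst_swap, Prod.snd_swap]
  rw [e1, e2, sW_succ A hz.1, sW_succ B hz.2]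
  push_cast at h
  linear_combination (z.1 * (z.1 + z.2) * sW A z.1 * sW B z.2 : ℂ) * h

lemma sM_linear {A B k : ℂ} (hA : -1 < A.re) (hB : -1 < B.re) (hk : 0 < k.re)
    (p q : ℝ × ℝ → ℂ) (hp : Continuous p) (hq : Continuous q) (a b : ℂ) :
    sM A B k (fun z => a * p z + b * q z) = a * sM A B k p + b * sM A B k q := by
  unfold sM
  rw [← MeasureTheory.integral_const_mul, ← MeasureTheory.integral_const_mul,
    ← MeasureTheory.integral_add ((sΦ_integrable hA hB hk p hp).const_mul a)
      ((sΦ_integrable hA hB hk q hq).const_mul b)]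
  congr 1
  ext z
  ring

lemma s_rec {A B ν : ℂ} (hA : -1 < A.re) (hB : -1 < B.re) (hν : 0 < ν.re) :
    ((3 + 2 * ν + 2 * A) * (4 + 2 * A + 2 * ν + 2 * B)) * sM (A + 1) B (2 * ν) (fun _ => 1) =
    ((2 + 2 * A) * (4 + 2 * A + 2 * B + 4 * ν)) * sM A B (2 * ν) (fun _ => 1) := by
  have hk : 0 < (2 * ν).re := by simpa using hν
  have e1 := s_E1 hA hB hν
  have e3 := s_E3 hA hB hν
  have e4 : sM (A + 1) B (2 * ν) (fun _ => 1) = sM A B (2 * ν) (fun z => 1 - (z.1:ℂ)^2) := by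
    apply MeasureTheory.integral_congr_ae
    filter_upwards [sρ2_ae] with z hz
    rw [sW_succ A hz.1]; ring
  have e5 := sM_linear hA hB hk
    (fun z => (1 + 2 * ν) * (1 - (z.1:ℂ)^2) - (2 + 2 * A) * ((z.1:ℂ)^2 - z.1 * z.2))
    (fun z => 1 - (3 + 2 * ν + 2 * A) * (z.1:ℂ)^2 - (2 + 2 * ν + 2 * B) * (z.1 * z.2))
    (by fun_prop) (by fun_prop) (2 + 2 * ν + 2 * B) (2 + 2 * A)
  have e6 := sM_linear hA hB hk (fun z => 1 - (z.1:ℂ)^2) (fun _ => 1)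
    (by fun_prop) (by fun_prop) ((3 + 2 * ν + 2 * A) * (4 + 2 * A + 2 * ν + 2 * B))
    (-((2 + 2 * A) * (4 + 2 * A + 2 * B + 4 * ν)))
  rw [e1, e3] at e5
  have e7 : sM A B (2 * ν) (fun z => ((3 + 2 * ν + 2 * A) * (4 + 2 * A + 2 * ν + 2 * B))
      * (1 - (z.1:ℂ)^2) + (-((2 + 2 * A) * (4 + 2 * A + 2 * B + 4 * ν))) * 1) = 0 := by
    have : (0:ℂ) = (2 + 2 * ν + 2 * B) * 0 + (2 + 2 * A) * 0 := by ring
    rw [this, ← e5]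
    congr 1
    ext z
    ring
  rw [e7] at e6
  rw [e4]
  linear_combination -e6

/-- inner integral -/
def sf (B k : ℂ) (s : ℝ) : ℂ := ∫ t, sW B t * sK k (s - t) ∂sρ

lemma sM_eq {A B k : ℂ} (hA : -1 < A.re) (hB : -1 < B.re) (hk : 0 < k.re) :
    sM A B k (fun _ => 1) = ∫ s, sW A s * sf B k s ∂sρ := by
  unfold sM
  rw [integral_prod _ (sΦ_integrable hA hB hk (fun _ => 1) (by fun_prop))]
  congr 1
  ext s
  rw [sf, ← MeasureTheory.integral_const_mul]
  congr 1
  ext t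
  ring

lemma sf_cont {B k : ℂ} (hB : -1 < B.re) (hk : 0 < k.re) : Continuous (sf B k) := by
  have hKc := sK_cont hk
  rw [continuous_iff_continuousAt]
  intro s0
  unfold sf
  apply MeasureTheory.continuousAt_of_dominated
    (bound := fun t => ‖sW B t‖ * (|s0| + 2) ^ k.re)
  · refine Filter.Eventually.of_forall fun s => ?_
    have := sW_meas B
    have := sK_meas k
    exact Measurable.aestronglyMeasurable (by fun_prop)
  · filter_upwards [Metric.ball_mem_nhds s0 one_pos] with s hs
    filter_upwards [sρ_ae] with t ht
    rw [norm_mul]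
    gcongr
    apply sK_norm_le hk
    rw [Metric.mem_ball, Real.dist_eq] at hs
    have h1 : |t| ≤ 1 := abs_le.mpr ⟨ht.1.le, ht.2.le⟩
    calc |s - t| = |(s - s0) + s0 - t| := by ring_nf
      _ ≤ |(s - s0) + s0| + |t| := abs_sub _ _
      _ ≤ |s - s0| + |s0| + |t| := by gcongr; exact abs_add_le _ _
      _ ≤ _ := by linarith
  · exact (sW_integrable hB).norm.mul_const _
  · refine Filter.Eventually.of_forall fun t => ?_
    exact Continuous.continuousAt (by fun_prop)

open Filter Topology in
lemma s_asym {A B k : ℂ} (hA : -1 < A.re) (hB : -1 < B.re) (hk : 0 < k.re) :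
    Tendsto (fun n : ℕ => ((√((n + 2 : ℕ) : ℝ) : ℝ) : ℂ) * sM (A + (n + 2 : ℕ)) B k (fun _ => 1)) atTop
      (𝓝 ((√Real.pi : ℝ) * sf B k 0)) := by
  have hfc := sf_cont hB hk
  obtain ⟨C, hC⟩ := (isCompact_Icc (a := (-1:ℝ)) (b := 1)).exists_bound_of_continuousOn
    hfc.continuousOn
  set F : ℕ → ℝ → ℂ := fun n x =>
    Set.indicator (Set.Ioo (-1:ℝ) 1) (fun s => sW (A + (n + 2 : ℕ)) s * sf B k s)
      (x / √((n + 2 : ℕ) : ℝ)) with hF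
  have hscale : ∀ n : ℕ, ((√((n + 2 : ℕ) : ℝ) : ℝ) : ℂ) * sM (A + (n + 2 : ℕ)) B k (fun _ => 1)
      = ∫ x, F n x := by
    intro n
    rw [hF]
    simp only
    rw [Measure.integral_comp_div, MeasureTheory.integral_indicator measurableSet_Ioo,
      sM_eq _ hB hk, abs_of_nonneg (Real.sqrt_nonneg _), Complex.real_smul, sρ]
    rw [Complex.add_re, Complex.natCast_re]
    have : (0:ℝ) ≤ (n + 2 : ℕ) := Nat.cast_nonneg _
    linarith
  have hlim : ((√Real.pi : ℝ) * sf B k 0 : ℂ) = ∫ x : ℝ, ((Real.exp (-1 * x^2) : ℝ) : ℂ) * sf B k 0 := by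
    rw [MeasureTheory.integral_mul_const, integral_complex_ofReal, integral_gaussian, div_one]
  simp_rw [hscale]
  rw [hlim]
  have hsq : ∀ n : ℕ, 0 < √((n + 2 : ℕ) : ℝ) := fun n => Real.sqrt_pos.mpr (by positivity)
  have hsq2 : ∀ n : ℕ, ∀ x : ℝ, (x / √((n + 2 : ℕ) : ℝ))^2 = x^2 / (n + 2 : ℕ) := fun n x => by
    rw [div_pow, Real.sq_sqrt (by positivity)]
  apply tendsto_integral_of_dominated_convergence (fun x => C * Real.exp (-(1/2) * x^2))
  · intro n
    apply Measurable.aestronglyMeasurable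
    have h1 := sW_meas (A + (n + 2 : ℕ))
    have h2 := hfc.measurable
    have h3 : Measurable (Set.indicator (Set.Ioo (-1:ℝ) 1)
      (fun s => sW (A + (n + 2 : ℕ)) s * sf B k s)) :=
      (h1.mul h2).indicator measurableSet_Ioo
    exact h3.comp (measurable_id.div_const _)
  · exact (integrable_exp_neg_mul_sq (by norm_num)).const_mul C
  · intro n
    refine Eventually.of_forall fun x => ?_
    have hC0 : 0 ≤ C := (norm_nonneg _).trans (hC 0 ⟨by norm_num, by norm_num⟩)
    simp only [hF]
    by_cases hx : x / √((n + 2 : ℕ) : ℝ) ∈ Set.Ioo (-1:ℝ) 1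
    · rw [Set.indicator_of_mem hx, norm_mul, mul_comm]
      refine mul_le_mul (hC _ ⟨hx.1.le, hx.2.le⟩) ?_ (norm_nonneg _) hC0
      rw [sW_norm _ hx]
      have hr : 0 < 1 - (x / √((n + 2 : ℕ) : ℝ))^2 := by nlinarith [hx.1, hx.2]
      have hr1 : 1 - (x / √((n + 2 : ℕ) : ℝ))^2 ≤ 1 := by nlinarith [sq_nonneg (x / √((n + 2 : ℕ) : ℝ))]
      rw [hsq2] at hr hr1 ⊢
      have h1 : (A + (n + 2 : ℕ)).re = (A.re + 1) + ((n + 1 : ℕ) : ℝ) := by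
        simp; ring
      rw [h1, Real.rpow_add hr, Real.rpow_natCast]
      have h2 : (1 - x^2 / (n + 2 : ℕ)) ^ (A.re + 1) ≤ 1 :=
        Real.rpow_le_one hr.le hr1 (by linarith)
      have h3 : (1 - x^2 / (n + 2 : ℕ)) ^ (n + 1) ≤ Real.exp (-(1/2) * x^2) := by
        calc (1 - x^2 / (n + 2 : ℕ)) ^ (n + 1) ≤ (Real.exp (-(x^2 / (n + 2 : ℕ)))) ^ (n + 1) := by
              gcongr; exact Real.one_sub_le_exp_neg _
          _ = Real.exp ((n + 1 : ℕ) * (-(x^2 / (n + 2 : ℕ)))) := by rw [Real.exp_nat_mul]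
          _ ≤ _ := by
            apply Real.exp_le_exp.mpr
            push_cast
            have hn : (0:ℝ) < n + 2 := by positivity
            have : (1/2 : ℝ) ≤ (n + 1) / (n + 2) := by
              rw [div_le_div_iff₀ (by norm_num) hn]; linarith [(Nat.cast_nonneg n : (0:ℝ) ≤ n)]
            have h5 : ((n:ℝ) + 1) * (-(x^2 / (n + 2))) = -((n + 1) / (n + 2)) * x^2 := by ring
            rw [h5]
            nlinarith [sq_nonneg x]
      calc _ ≤ 1 * Real.exp (-(1/2) * x^2) := by gcongr
        _ = _ := one_mul _
    · rw [Set.indicator_of_notMem hx, norm_zero]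
      positivity
  · refine Eventually.of_forall fun x => ?_
    have hN : Tendsto (fun n : ℕ => n + 2) atTop atTop := tendsto_add_atTop_nat 2
    have hNR : Tendsto (fun n : ℕ => ((n + 2 : ℕ) : ℝ)) atTop atTop :=
      tendsto_natCast_atTop_atTop.comp hN
    have hx0 : Tendsto (fun n : ℕ => x / √((n + 2 : ℕ) : ℝ)) atTop (𝓝 0) :=
      Tendsto.div_atTop tendsto_const_nhds (Real.tendsto_sqrt_atTop.comp hNR)
    have hev : ∀ᶠ n : ℕ in atTop, x / √((n + 2 : ℕ) : ℝ) ∈ Set.Ioo (-1:ℝ) 1 :=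
      hx0.eventually (Ioo_mem_nhds (by norm_num) (by norm_num))
    have hf0 : Tendsto (fun n : ℕ => sf B k (x / √((n + 2 : ℕ) : ℝ))) atTop (𝓝 (sf B k 0)) :=
      (hfc.tendsto 0).comp hx0
    have hWA : Tendsto (fun n : ℕ => sW A (x / √((n + 2 : ℕ) : ℝ))) atTop (𝓝 1) := by
      have hc : ContinuousAt (sW A) 0 := by
        unfold sW
        refine ContinuousAt.cpow ?_ continuousAt_const ?_
        · fun_prop
        · simp
      have := hc.tendsto.comp hx0
      simpa [sW, Function.comp_def] using this
    have hexp : Tendsto (fun n : ℕ => (((1 + (-x^2) / ((n + 2 : ℕ) : ℝ)) ^ (n + 2) : ℝ) : ℂ)) atTop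
        (𝓝 ((Real.exp (-1 * x^2) : ℝ) : ℂ)) := by
      have := ((Real.tendsto_one_add_div_pow_exp (-x^2)).comp hN)
      rw [show -1 * x^2 = -x^2 by ring]
      exact (Complex.continuous_ofReal.tendsto _).comp this
    have := (hWA.mul hexp).mul hf0
    rw [one_mul] at this
    refine this.congr' ?_
    filter_upwards [hev] with n hn
    simp only [hF]
    rw [Set.indicator_of_mem hn]
    congr 1
    have hr : 0 < 1 - (x / √((n + 2 : ℕ) : ℝ))^2 := by nlinarith [hn.1, hn.2]
    unfold sW
    rw [Complex.cpow_add _ _ (by exact_mod_cast hr.ne'), Complex.cpow_natCast, hsq2,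
      ← Complex.ofReal_pow]
    congr 3
    ring

lemma sf_zero {B ν : ℂ} (hB : -1 < B.re) (hν : 0 < ν.re) :
    sf B (2 * ν) 0 = Complex.betaIntegral (ν + 1 / 2) (B + 1) := by
  have hk : 0 < (2 * ν).re := by simpa using hν
  have hKc := sK_cont hk
  set h : ℝ → ℂ := fun t => sW B t * sK (2 * ν) (0 - t) with hh
  have hint : IntervalIntegrable h volume (-1) 1 := by
    rw [intervalIntegrable_iff_integrableOn_Ioo_of_le (by norm_num)]
    have := (sW_integrable hB).bdd_mul (f := fun t => sK (2 * ν) (0 - t)) (c := 1 ^ (2*ν).re)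
      (Continuous.aestronglyMeasurable (by fun_prop)) ?_
    · refine this.congr (Filter.Eventually.of_forall fun t => ?_)
      simp only [hh]; ring
    · filter_upwards [sρ_ae] with t ht
      apply sK_norm_le hk
      rw [abs_le]; constructor <;> linarith [ht.1, ht.2]
  have e1 : sf B (2*ν) 0 = ∫ t in (-1:ℝ)..1, h t := by rw [s_int_eq]; rfl
  have hl : IntervalIntegrable h volume (-1) 0 := hint.mono_set (by
    rw [Set.uIcc_of_le (by norm_num), Set.uIcc_of_le (by norm_num)]
    exact Set.Icc_subset_Icc_right (by norm_num))
  have hr : IntervalIntegrable h volume 0 1 := hint.mono_set (by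
    rw [Set.uIcc_of_le (by norm_num), Set.uIcc_of_le (by norm_num)]
    exact Set.Icc_subset_Icc_left (by norm_num))
  have e2 : ∫ t in (-1:ℝ)..0, h t = ∫ t in (0:ℝ)..1, h t := by
    have := intervalIntegral.integral_comp_neg (a := 0) (b := 1) h
    rw [neg_zero] at this
    rw [← this]
    congr 1
    ext t
    simp [hh, sW, sK]
  rw [e1, ← intervalIntegral.integral_add_adjacent_intervals hl hr, e2]
  unfold Complex.betaIntegral
  rw [intervalIntegral.integral_of_le (by norm_num), intervalIntegral.integral_of_le (by norm_num),
    integral_Ioc_eq_integral_Ioo, integral_Ioc_eq_integral_Ioo]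
  have him : (fun x : ℝ => x^2) '' Set.Ioo 0 1 = Set.Ioo 0 1 := by
    ext y
    constructor
    · rintro ⟨x, hx, rfl⟩
      constructor
      · have := hx.1; positivity
      · simp only; nlinarith [hx.1, hx.2]
    · intro hy
      refine ⟨√y, ⟨Real.sqrt_pos.mpr hy.1, ?_⟩, Real.sq_sqrt hy.1.le⟩
      rw [Real.sqrt_lt' one_pos]; simpa using hy.2
  have key := integral_image_eq_integral_abs_deriv_smul (s := Set.Ioo (0:ℝ) 1) (f := fun x => x^2)
    (f' := fun x => 2 * x) measurableSet_Ioo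
    (fun x _ => by simpa using ((hasDerivAt_pow 2 x).hasDerivWithinAt))
    (fun x hx y hy hxy => by
      have := hx.1; have := hy.1
      exact (sq_eq_sq₀ (by linarith) (by linarith)).mp hxy)
    (fun x : ℝ => (x:ℂ) ^ (ν + 1/2 - 1) * (1 - (x:ℂ)) ^ (B + 1 - 1))
  rw [him] at key
  rw [key, ← MeasureTheory.integral_add ((intervalIntegrable_iff_integrableOn_Ioo_of_le (by norm_num)).mp hr)
    ((intervalIntegrable_iff_integrableOn_Ioo_of_le (by norm_num)).mp hr)]
  apply setIntegral_congr_fun measurableSet_Ioo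
  intro x hx
  have hx0 : (x:ℂ) ≠ 0 := by exact_mod_cast hx.1.ne'
  simp only [hh, sW, sK, Complex.real_smul, zero_sub, abs_neg]
  rw [abs_of_pos hx.1, abs_of_pos (by linarith [hx.1])]
  have e3 : ((x^2 : ℝ) : ℂ) ^ (ν + 1/2 - 1) * x = (x:ℂ) ^ (2 * ν) := by
    rw [Complex.ofReal_pow, pow_two, Complex.mul_cpow_ofReal_nonneg hx.1.le hx.1.le]
    rw [← Complex.cpow_add _ _ hx0]
    nth_rewrite 2 [← Complex.cpow_one (x:ℂ)]
    rw [← Complex.cpow_add _ _ hx0]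
    congr 1; ring
  rw [← e3]
  push_cast
  rw [add_sub_cancel_right]
  ring

open Filter Topology in
lemma s_gamma {s : ℂ} (hs : 0 < s.re) :
    Tendsto (fun n : ℕ => Complex.Gamma (s + n) / ((n:ℂ) ^ (s - 1) * n.factorial)) atTop (𝓝 1) := by
  have hne : ∀ n : ℕ, s + n ≠ 0 := by
    intro n h
    have := congrArg Complex.re h
    simp at this
    have h2 : (0:ℝ) ≤ n := Nat.cast_nonneg n
    linarith
  have hG : Complex.Gamma s ≠ 0 := Complex.Gamma_ne_zero_of_re_pos hs
  have hprod : ∀ n : ℕ, Complex.Gamma (s + n) = Complex.Gamma s * ∏ j ∈ Finset.range n, (s + j) := by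
    intro n
    induction n with
    | zero => simp
    | succ n ih =>
      rw [Finset.prod_range_succ, ← mul_assoc, ← ih, Nat.cast_succ, ← add_assoc,
        Complex.Gamma_add_one _ (hne n), mul_comm]
  have h1 : Tendsto (fun n : ℕ => Complex.Gamma s / Complex.GammaSeq s n) atTop (𝓝 1) := by
    have := (tendsto_const_nhds (x := Complex.Gamma s)).div (Complex.GammaSeq_tendsto_Gamma s) hG
    rwa [div_self hG] at this
  have h2 : Tendsto (fun n : ℕ => (n:ℂ) / (n + s)) atTop (𝓝 1) := tendsto_natCast_div_add_atTop s
  have := h1.mul h2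
  rw [one_mul] at this
  refine this.congr' ?_
  filter_upwards [eventually_ne_atTop 0] with n hn
  have hn' : (n:ℂ) ≠ 0 := by exact_mod_cast hn
  have hp : ∏ j ∈ Finset.range n, (s + j) ≠ 0 := Finset.prod_ne_zero_iff.mpr fun j _ => hne j
  have hf : (n.factorial : ℂ) ≠ 0 := by exact_mod_cast n.factorial_ne_zero
  have hc : (n:ℂ) ^ s ≠ 0 := by simp [Complex.cpow_eq_zero_iff, hn']
  have h3 := hne n
  rw [hprod, Complex.GammaSeq, Finset.prod_range_succ, Complex.cpow_sub _ _ hn', Complex.cpow_one,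
    add_comm (n:ℂ) s]
  field_simp

open Filter Topology in
lemma s_gamma4 {a b c d : ℂ} (ha : 0 < a.re) (hb : 0 < b.re) (hc : 0 < c.re) (hd : 0 < d.re)
    (h : a + b + 1 / 2 = c + d) :
    Tendsto (fun n : ℕ => ((√(n : ℝ) : ℝ) : ℂ) * (Complex.Gamma (a + n) * Complex.Gamma (b + n) /
      (Complex.Gamma (c + n) * Complex.Gamma (d + n)))) atTop (𝓝 1) := by
  have := ((s_gamma ha).mul (s_gamma hb)).div ((s_gamma hc).mul (s_gamma hd)) (by simp)
  rw [show (1:ℂ) * 1 / (1 * 1) = 1 by simp] at this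
  refine this.congr' ?_
  filter_upwards [eventually_ne_atTop 0] with n hn
  have hn' : (n:ℂ) ≠ 0 := by exact_mod_cast hn
  have hf : (n.factorial : ℂ) ≠ 0 := by exact_mod_cast n.factorial_ne_zero
  have hcp : ∀ z : ℂ, (n:ℂ) ^ z ≠ 0 := fun z => by simp [Complex.cpow_eq_zero_iff, hn']
  have hg : ∀ z : ℂ, 0 < z.re → Complex.Gamma (z + n) ≠ 0 := fun z hz => by
    apply Complex.Gamma_ne_zero_of_re_pos
    simp; positivity
  have e1 := hg c hc
  have e2 := hg d hd
  have e3 : ((√(n : ℝ) : ℝ) : ℂ) * (n:ℂ) ^ (a - 1) * (n:ℂ) ^ (b - 1) = (n:ℂ) ^ (c - 1) * (n:ℂ) ^ (d - 1) := by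
    have : ((√(n : ℝ) : ℝ) : ℂ) = (n:ℂ) ^ (1/2 : ℂ) := by
      rw [Real.sqrt_eq_rpow, Complex.ofReal_cpow (Nat.cast_nonneg n)]
      push_cast; rfl
    rw [this, ← Complex.cpow_add _ _ hn', ← Complex.cpow_add _ _ hn', ← Complex.cpow_add _ _ hn']
    congr 1
    linear_combination h
  have e4 := hcp (a - 1)
  have e5 := hcp (b - 1)
  have e6 := hcp (c - 1)
  have e7 := hcp (d - 1)
  rw [Pi.div_apply]
  field_simp
  linear_combination (-Complex.Gamma (a + n) * Complex.Gamma (b + n)) * e3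

/-- Gamma quotient -/
def sR (mu ν l : ℂ) : ℂ := Complex.Gamma (l + 1 / 2) * Complex.Gamma (l + mu + 2 * ν + 1) /
  (Complex.Gamma (l + ν + 1) * Complex.Gamma (l + mu + ν + 1))

lemma s_ne {z : ℂ} (h : 0 < z.re) : z ≠ 0 := by rintro rfl; simp at h

lemma s_half : ((1:ℂ)/2).re = 1/2 := by norm_num

lemma sR_rec {l mu ν : ℂ} (hl : -(1 / 2 : ℝ) < l.re) (hmu : -(1 / 2 : ℝ) < mu.re) (hν : 0 < ν.re) :
    (l + ν + 1) * (l + mu + ν + 1) * sR mu ν (l + 1) =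
      (l + 1 / 2) * (l + mu + 2 * ν + 1) * sR mu ν l := by
  have h1 : 0 < (l + 1 / 2).re := by rw [Complex.add_re, s_half]; linarith
  have h2 : 0 < (l + mu + 2 * ν + 1).re := by simp; linarith
  have h3 : 0 < (l + ν + 1).re := by simp; linarith
  have h4 : 0 < (l + mu + ν + 1).re := by simp; linarith
  unfold sR
  rw [show l + 1 + 1 / 2 = (l + 1 / 2) + 1 by ring,
    show l + 1 + mu + 2 * ν + 1 = (l + mu + 2 * ν + 1) + 1 by ring,
    show l + 1 + ν + 1 = (l + ν + 1) + 1 by ring,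
    show l + 1 + mu + ν + 1 = (l + mu + ν + 1) + 1 by ring,
    Complex.Gamma_add_one _ (s_ne h1), Complex.Gamma_add_one _ (s_ne h2),
    Complex.Gamma_add_one _ (s_ne h3), Complex.Gamma_add_one _ (s_ne h4)]
  have e3 := Complex.Gamma_ne_zero_of_re_pos h3
  have e4 := Complex.Gamma_ne_zero_of_re_pos h4
  have n3 := s_ne h3
  have n4 := s_ne h4
  generalize Complex.Gamma (l + ν + 1) = g3 at *
  generalize Complex.Gamma (l + mu + ν + 1) = g4 at *
  generalize l + ν + 1 = x3 at *
  generalize l + mu + ν + 1 = x4 at *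
  field_simp

lemma s_ratio {l mu ν : ℂ} (hl : -(1 / 2 : ℝ) < l.re) (hmu : -(1 / 2 : ℝ) < mu.re) (hν : 0 < ν.re)
    (n : ℕ) :
    sM (l - 1 / 2) (mu - 1 / 2) (2 * ν) (fun _ => 1) * sR mu ν (l + n) =
      sM (l - 1 / 2 + n) (mu - 1 / 2) (2 * ν) (fun _ => 1) * sR mu ν l := by
  induction n with
  | zero => simp
  | succ n ih =>
    have hl' : -(1 / 2 : ℝ) < (l + n).re := by
      simp
      have h2 : (0:ℝ) ≤ n := Nat.cast_nonneg n
      linarith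
    have h1 := sR_rec hl' hmu hν
    have h2 := s_rec (A := l - 1 / 2 + n) (B := mu - 1 / 2) (ν := ν)
      (by rw [Complex.add_re, Complex.sub_re, s_half]; rw [Complex.add_re] at hl'; linarith)
      (by rw [Complex.sub_re, s_half]; linarith) hν
    have h3 : 0 < (l + n + ν + 1).re := by
      rw [Complex.add_re, Complex.add_re, Complex.one_re]; linarith
    have h4 : 0 < (l + n + mu + ν + 1).re := by
      rw [Complex.add_re, Complex.add_re, Complex.add_re, Complex.one_re]; linarith
    have n3 := s_ne h3
    have n4 := s_ne h4
    apply mul_left_cancel₀ (mul_ne_zero n3 n4)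
    rw [Nat.cast_succ, ← add_assoc, ← add_assoc]
    linear_combination (sM (l - 1 / 2) (mu - 1 / 2) (2 * ν) (fun _ => 1)) * h1
      - (sR mu ν l / 4) * h2 + ((l + n + 1 / 2) * (l + n + mu + 2 * ν + 1)) * ih

open Filter Topology in
lemma s_main {l mu ν : ℂ} (hl : -(1 / 2 : ℝ) < l.re) (hmu : -(1 / 2 : ℝ) < mu.re) (hν : 0 < ν.re) :
    sM (l - 1 / 2) (mu - 1 / 2) (2 * ν) (fun _ => 1) =
      (√Real.pi : ℝ) * sf (mu - 1 / 2) (2 * ν) 0 * sR mu ν l := by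
  have h1 : 0 < (l + 1 / 2).re := by rw [Complex.add_re, s_half]; linarith
  have h2 : 0 < (l + mu + 2 * ν + 1).re := by simp; linarith
  have h3 : 0 < (l + ν + 1).re := by simp; linarith
  have h4 : 0 < (l + mu + ν + 1).re := by simp; linarith
  have hk : 0 < (2 * ν).re := by simpa using hν
  have ha := s_asym (A := l - 1 / 2) (B := mu - 1 / 2) (k := 2 * ν)
    (by rw [Complex.sub_re, s_half]; linarith) (by rw [Complex.sub_re, s_half]; linarith) hk
  have hg := (s_gamma4 h1 h2 h3 h4 (by ring)).comp (tendsto_add_atTop_nat 2)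
  have hg' := hg.const_mul (sM (l - 1 / 2) (mu - 1 / 2) (2 * ν) (fun _ => 1))
  have ha' := ha.mul_const (sR mu ν l)
  rw [mul_one] at hg'
  refine tendsto_nhds_unique hg' (ha'.congr fun n => ?_)
  have hr := s_ratio hl hmu hν (n + 2)
  rw [mul_assoc, ← hr]
  unfold sR
  simp only [Function.comp_apply]
  rw [show l + (n + 2 : ℕ) + 1 / 2 = (l + 1 / 2) + (n + 2 : ℕ) by ring,
    show l + (n + 2 : ℕ) + mu + 2 * ν + 1 = (l + mu + 2 * ν + 1) + (n + 2 : ℕ) by ring,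
    show l + (n + 2 : ℕ) + ν + 1 = (l + ν + 1) + (n + 2 : ℕ) by ring,
    show l + (n + 2 : ℕ) + mu + ν + 1 = (l + mu + ν + 1) + (n + 2 : ℕ) by ring]
  ring

end S13

theorem stmt13 (lam mu ν : ℂ) (hlam : -(1 / 2 : ℝ) < lam.re)
    (hmu : -(1 / 2 : ℝ) < mu.re) (hν : 0 < ν.re) :
    (∫ s in (-1 : ℝ)..1, ∫ t in (-1 : ℝ)..1,
        ((|s - t| : ℝ) : ℂ) ^ (2 * ν) * ((1 - s ^ 2 : ℝ) : ℂ) ^ (lam - 1 / 2 : ℂ) *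
          ((1 - t ^ 2 : ℝ) : ℂ) ^ (mu - 1 / 2 : ℂ)) =
      (Real.sqrt Real.pi : ℂ) * Complex.Gamma (lam + 1 / 2) * Complex.Gamma (mu + 1 / 2) *
          Complex.Gamma (ν + 1 / 2) * Complex.Gamma (lam + mu + 2 * ν + 1) /
        (Complex.Gamma (lam + ν + 1) * Complex.Gamma (mu + ν + 1) *
          Complex.Gamma (lam + mu + ν + 1)) := by
  have hA : -1 < (lam - 1 / 2).re := by rw [Complex.sub_re, s_half]; linarith
  have hB : -1 < (mu - 1 / 2).re := by rw [Complex.sub_re, s_half]; linarith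
  have hk : 0 < (2 * ν).re := by simpa using hν
  have e1 : (∫ s in (-1 : ℝ)..1, ∫ t in (-1 : ℝ)..1,
        ((|s - t| : ℝ) : ℂ) ^ (2 * ν) * ((1 - s ^ 2 : ℝ) : ℂ) ^ (lam - 1 / 2 : ℂ) *
          ((1 - t ^ 2 : ℝ) : ℂ) ^ (mu - 1 / 2 : ℂ)) =
      sM (lam - 1 / 2) (mu - 1 / 2) (2 * ν) (fun _ => 1) := by
    rw [sM_eq hA hB hk, s_int_eq]
    congr 1
    ext s
    rw [s_int_eq, sf, ← MeasureTheory.integral_const_mul]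
    congr 1
    ext t
    simp only [sW, sK]
    ring
  have hb1 : 0 < (ν + 1 / 2).re := by rw [Complex.add_re, s_half]; linarith
  have hb2 : 0 < (mu - 1 / 2 + 1).re := by rw [Complex.add_re, Complex.one_re]; linarith
  have hb3 : 0 < (mu + ν + 1).re := by simp; linarith
  have hbeta := Complex.Gamma_mul_Gamma_eq_betaIntegral hb1 hb2
  rw [show ν + 1 / 2 + (mu - 1 / 2 + 1) = mu + ν + 1 by ring,
    show mu - 1 / 2 + 1 = mu + 1 / 2 by ring] at hbeta
  have hn := Complex.Gamma_ne_zero_of_re_pos hb3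
  have hb : Complex.betaIntegral (ν + 1 / 2) (mu + 1 / 2) =
      Complex.Gamma (ν + 1 / 2) * Complex.Gamma (mu + 1 / 2) / Complex.Gamma (mu + ν + 1) := by
    rw [hbeta, mul_div_cancel_left₀ _ hn]
  rw [e1, s_main hlam hmu hν, sf_zero hB hν, show mu - 1 / 2 + 1 = mu + 1 / 2 by ring, hb, sR]
  ring
end

section
/- Suppose λ, ν ∈ ℂ with Re λ > −1/2 and Re ν > 0. Then ∫_{−1}^1 ∫_{−1}^1 (1 − s²)^{λ−1/2} (1 − t²)^{λ−1/2} |s − t|^{2ν} ds dt = (2^{4λ+2ν} Γ(λ+1/2)² / Γ(2λ+1+ν)) · (Γ(λ+ν+1/2)² Γ(1+2ν) / (Γ(2λ+2ν+1) Γ(1+ν))). (This is the n = 2, α = β = λ + 1/2 case of the Selberg integral, after the change of variables t_i = (1 + x_i)/2.) -/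
open MeasureTheory intervalIntegral Set

lemma beta_ab {a b : ℝ} (hab : a < b) {u v : ℂ} (hu : 0 < u.re) (hv : 0 < v.re) :
    IntegrableOn (fun x : ℝ => ((x - a : ℝ) : ℂ) ^ (u - 1) * ((b - x : ℝ) : ℂ) ^ (v - 1)) (Ioo a b) ∧
    ∫ x in Ioo a b, ((x - a : ℝ) : ℂ) ^ (u - 1) * ((b - x : ℝ) : ℂ) ^ (v - 1) =
      ((b - a : ℝ) : ℂ) ^ (u + v - 1) * (Complex.Gamma u * Complex.Gamma v / Complex.Gamma (u + v)) := by
  have huv : Complex.Gamma (u + v) ≠ 0 :=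
    Complex.Gamma_ne_zero_of_re_pos (by simp; linarith)
  have key : ∫ x in Ioo a b, ((x - a : ℝ) : ℂ) ^ (u - 1) * ((b - x : ℝ) : ℂ) ^ (v - 1) =
      ((b - a : ℝ) : ℂ) ^ (u + v - 1) * (Complex.Gamma u * Complex.Gamma v / Complex.Gamma (u + v)) := by
    rw [← integral_Ioc_eq_integral_Ioo, ← intervalIntegral.integral_of_le hab.le]
    have h1 := Complex.betaIntegral_scaled u v (sub_pos.2 hab)
    have h2 := intervalIntegral.integral_comp_sub_right (a := a) (b := b) (fun x : ℝ => (x : ℂ) ^ (u - 1) * (((b - a : ℝ) : ℂ) - x) ^ (v - 1)) a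
    rw [sub_self, h1] at h2
    rw [Complex.Gamma_mul_Gamma_eq_betaIntegral hu hv, mul_div_cancel_left₀ _ huv, ← h2]
    congr 1
    ext x
    push_cast
    congr 2
    ring
  refine ⟨?_, key⟩
  by_contra h
  have := key.symm.trans (integral_undef h)
  have hc : ((b - a : ℝ) : ℂ) ≠ 0 := by exact_mod_cast (sub_pos.2 hab).ne'
  simp only [mul_eq_zero, div_eq_zero_iff, huv, Complex.Gamma_ne_zero_of_re_pos hu, Complex.Gamma_ne_zero_of_re_pos hv, or_false, Complex.cpow_eq_zero_iff, hc, false_and] at this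

lemma int_prod {X Y : Type*} [MeasureSpace X] [MeasureSpace Y] [SFinite (volume : Measure X)]
    [SFinite (volume : Measure Y)]
    {f g : X × Y → ℂ} (hm : Measurable f) (hg : ∀ z, g z = ((‖f z‖ : ℝ) : ℂ))
    (h1 : ∀ x, Integrable (fun y => f (x, y)))
    (h2 : Integrable (fun x => ∫ y, g (x, y))) : Integrable f := by
  rw [Measure.volume_eq_prod, integrable_prod_iff hm.aestronglyMeasurable]
  refine ⟨Filter.Eventually.of_forall h1, ?_⟩
  simp only [hg, integral_complex_ofReal] at h2
  simpa using h2.re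

noncomputable def dF (α γ : ℂ) (p : ℝ × ℝ) : ℂ :=
  indicator {p : ℝ × ℝ | 0 < p.1 ∧ 0 < p.2 ∧ p.1 + p.2 < 1}
    (fun p => (p.1 : ℂ) ^ (α - 1) * (p.2 : ℂ) ^ (α - 1) * ((1 - p.1 - p.2 : ℝ) : ℂ) ^ (γ - 1)) p

lemma dS_meas : MeasurableSet {p : ℝ × ℝ | 0 < p.1 ∧ 0 < p.2 ∧ p.1 + p.2 < 1} := by
  measurability

lemma dF_meas (α γ : ℂ) : Measurable (dF α γ) := by
  unfold dF
  refine Measurable.indicator ?_ dS_meas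
  fun_prop

lemma norm_cpow' {x : ℝ} (hx : 0 < x) (z : ℂ) : ((‖(x : ℂ) ^ (z - 1)‖ : ℝ) : ℂ) = (x : ℂ) ^ ((z.re : ℂ) - 1) := by
  rw [Complex.norm_cpow_eq_rpow_re_of_pos hx, Complex.ofReal_cpow hx.le]
  simp

lemma dF_norm (α γ : ℂ) (p) : dF α.re γ.re p = ((‖dF α γ p‖ : ℝ) : ℂ) := by
  unfold dF
  by_cases h : p ∈ {p : ℝ × ℝ | 0 < p.1 ∧ 0 < p.2 ∧ p.1 + p.2 < 1}
  · rw [indicator_of_mem h, indicator_of_mem h]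
    obtain ⟨h1, h2, h3⟩ := h
    rw [norm_mul, norm_mul, Complex.ofReal_mul, Complex.ofReal_mul, norm_cpow' h1, norm_cpow' h2,
      norm_cpow' (by linarith : 0 < 1 - p.1 - p.2)]
  · rw [indicator_of_notMem h, indicator_of_notMem h]; simp

lemma dF_sec (α γ : ℂ) (x : ℝ) : (fun y => dF α γ (x, y)) =
    (Ioo (0:ℝ) (1 - x)).indicator (fun y => (if x ∈ Ioo (0:ℝ) 1 then (x : ℂ) ^ (α - 1) else 0) *
      (((y - 0 : ℝ) : ℂ) ^ (α - 1) * ((1 - x - y : ℝ) : ℂ) ^ (γ - 1))) := by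
  ext y
  unfold dF
  simp only [indicator, mem_ofPred_eq, mem_Ioo]
  by_cases h : 0 < x ∧ 0 < y ∧ x + y < 1
  · obtain ⟨h1, h2, h3⟩ := h
    rw [if_pos ⟨h1, h2, h3⟩, if_pos ⟨h2, by linarith⟩, if_pos ⟨h1, by linarith⟩]
    simp [mul_assoc]
  · rw [if_neg h]
    split_ifs with h1 h2
    · exact absurd ⟨h2.1, h1.1, by linarith [h1.2]⟩ h
    · simp
    · rfl

lemma dF_sec_int {α γ : ℂ} (hα : 0 < α.re) (hγ : 0 < γ.re) (x : ℝ) :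
    Integrable (fun y => dF α γ (x, y)) ∧ ∫ y, dF α γ (x, y) =
      (Ioo (0:ℝ) 1).indicator (fun x => (((x - 0 : ℝ) : ℂ) ^ (α - 1) * ((1 - x : ℝ) : ℂ) ^ (α + γ - 1)) *
        (Complex.Gamma α * Complex.Gamma γ / Complex.Gamma (α + γ))) x := by
  rw [dF_sec, integrable_indicator_iff measurableSet_Ioo, MeasureTheory.integral_indicator measurableSet_Ioo]
  by_cases h : x ∈ Ioo (0:ℝ) 1
  · have := beta_ab (sub_pos.2 h.2) hα hγ
    refine ⟨this.1.const_mul _, ?_⟩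
    rw [MeasureTheory.integral_const_mul, this.2, indicator_of_mem h, if_pos h]
    simp [mul_assoc]
  · simp [h]

lemma dF_int {α γ : ℂ} (hα : 0 < α.re) (hγ : 0 < γ.re) :
    Integrable (dF α γ) ∧ ∫ p, dF α γ p = Complex.Gamma α ^ 2 * Complex.Gamma γ / Complex.Gamma (2 * α + γ) := by
  have h0 : Integrable (dF α γ) := by
    refine int_prod (dF_meas α γ) (dF_norm α γ) (fun x => (dF_sec_int hα hγ x).1) ?_
    simp only [fun x => (dF_sec_int (α := α.re) (γ := γ.re) (by simpa) (by simpa) x).2]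
    rw [integrable_indicator_iff measurableSet_Ioo]
    exact (beta_ab zero_lt_one (by simpa) (by simp; linarith)).1.mul_const _
  refine ⟨h0, ?_⟩
  rw [Measure.volume_eq_prod, integral_prod _ h0]
  simp only [fun x => (dF_sec_int hα hγ x).2]
  rw [MeasureTheory.integral_indicator measurableSet_Ioo, MeasureTheory.integral_mul_const, (beta_ab zero_lt_one hα (by simp; linarith)).2]
  have : Complex.Gamma (α + γ) ≠ 0 :=
    Complex.Gamma_ne_zero_of_re_pos (by simp; linarith)
  rw [show α + (α + γ) = 2 * α + γ by ring]
  simp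
  field_simp

def DS (y : ℝ) : Set (ℝ × ℝ) := {p : ℝ × ℝ | -1 < p.1 ∧ p.1 < y ∧ y < p.2 ∧ p.2 < 1}

noncomputable def phi (y : ℝ) (p : ℝ × ℝ) : ℝ × ℝ :=
  ((1 + p.1) * (1 + p.2) * (2 * (1 + y))⁻¹, (1 - p.1) * (1 - p.2) * (2 * (1 - y))⁻¹)

noncomputable def phi' (y : ℝ) (p : ℝ × ℝ) : ℝ × ℝ →L[ℝ] ℝ × ℝ :=
  (Matrix.toLin (.finTwoProd ℝ) (.finTwoProd ℝ)
    !![(1 + p.2) * (2 * (1 + y))⁻¹, (1 + p.1) * (2 * (1 + y))⁻¹;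
      -(1 - p.2) * (2 * (1 - y))⁻¹, -(1 - p.1) * (2 * (1 - y))⁻¹]).toContinuousLinearMap

lemma phi_deriv (y : ℝ) (p : ℝ × ℝ) : HasFDerivAt (phi y) (phi' y p) p := by
  unfold phi' phi
  rw [Matrix.toLin_finTwoProd_toContinuousLinearMap]
  have h1 : HasFDerivAt (fun p : ℝ × ℝ => p.1) (ContinuousLinearMap.fst ℝ ℝ ℝ) p := hasFDerivAt_fst
  have h2 : HasFDerivAt (fun p : ℝ × ℝ => p.2) (ContinuousLinearMap.snd ℝ ℝ ℝ) p := hasFDerivAt_snd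
  refine (HasFDerivAt.prodMk
    (((h1.const_add 1).mul (h2.const_add 1)).mul_const (2 * (1 + y))⁻¹)
    (((h1.const_sub 1).mul (h2.const_sub 1)).mul_const (2 * (1 - y))⁻¹)).congr_fderiv ?_
  ext <;> simp <;> ring

lemma phi_det {y : ℝ} (hy : y ∈ Ioo (-1:ℝ) 1) (p : ℝ × ℝ) :
    (phi' y p).det = -(p.2 - p.1) / (2 * (1 - y ^ 2)) := by
  unfold phi'
  simp only [LinearMap.det_toContinuousLinearMap, LinearMap.det_toLin, Matrix.det_fin_two_of]
  have h1 : 1 + y ≠ 0 := by linarith [hy.1]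
  have h2 : 1 - y ≠ 0 := by linarith [hy.2]
  have h3 : 1 - y ^ 2 ≠ 0 := by rw [show 1 - y ^ 2 = (1 + y) * (1 - y) by ring]; positivity
  have : 1 - y ^ 2 = (1 + y) * (1 - y) := by ring
  rw [this]
  field_simp
  ring

lemma phi_inj {y : ℝ} (hy : y ∈ Ioo (-1:ℝ) 1) : InjOn (phi y) (DS y) := by
  rintro ⟨s, t⟩ ⟨h1, h2, h3, h4⟩ ⟨s', t'⟩ ⟨h1', h2', h3', h4'⟩ h
  simp only [phi, Prod.mk.injEq] at h h1 h2 h3 h4 h1' h2' h3' h4' ⊢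
  have e1 : (2 * (1 + y))⁻¹ ≠ 0 := by
    have : 0 < 1 + y := by linarith [hy.1]
    positivity
  have e2 : (2 * (1 - y))⁻¹ ≠ 0 := by
    have : 0 < 1 - y := by linarith [hy.2]
    positivity
  have a1 := mul_right_cancel₀ e1 h.1
  have a2 := mul_right_cancel₀ e2 h.2
  have a3 : t' = s + t - s' := by linarith
  have a4 : (s - s') * (s' - t) = 0 := by subst a3; nlinarith
  have a5 : s = s' := by
    rcases mul_eq_zero.1 a4 with h | h <;> linarith
  exact ⟨a5, by linarith⟩

lemma phi_wy {y : ℝ} (hy : y ∈ Ioo (-1:ℝ) 1) (p : ℝ × ℝ) :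
    1 - (phi y p).1 - (phi y p).2 = (y - p.1) * (p.2 - y) * (1 - y ^ 2)⁻¹ := by
  have h1 : 1 + y ≠ 0 := by linarith [hy.1]
  have h2 : 1 - y ≠ 0 := by linarith [hy.2]
  have : 1 - y ^ 2 = (1 + y) * (1 - y) := by ring
  rw [this]
  unfold phi
  field_simp
  ring

lemma phi_image {y : ℝ} (hy : y ∈ Ioo (-1:ℝ) 1) :
    phi y '' DS y = {p : ℝ × ℝ | 0 < p.1 ∧ 0 < p.2 ∧ p.1 + p.2 < 1} := by
  have e1 : 0 < 1 + y := by linarith [hy.1]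
  have e2 : 0 < 1 - y := by linarith [hy.2]
  have e3 : 0 < 1 - y ^ 2 := by nlinarith
  ext ⟨a, b⟩
  constructor
  · rintro ⟨p, ⟨h1, h2, h3, h4⟩, hp⟩
    have hw := phi_wy hy p
    rw [hp] at hw
    simp only [phi, Prod.mk.injEq] at hp
    refine ⟨?_, ?_, ?_⟩
    · show 0 < a
      rw [← hp.1]
      have : 0 < 1 + p.1 := by linarith
      have : 0 < 1 + p.2 := by linarith
      positivity
    · show 0 < b
      rw [← hp.2]
      have : 0 < 1 - p.1 := by linarith
      have : 0 < 1 - p.2 := by linarith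
      positivity
    · show a + b < 1
      have : 0 < (y - p.1) * (p.2 - y) * (1 - y ^ 2)⁻¹ := by
        have : 0 < y - p.1 := by linarith
        have : 0 < p.2 - y := by linarith
        positivity
      simp only at hw
      linarith
  · rintro ⟨ha, hb, hab⟩
    simp only at ha hb hab
    set P := (1 + y) * a - (1 - y) * b with hP
    set Q := (1 + y) * a + (1 - y) * b - 1 with hQ
    have hc : ContinuousOn (fun x : ℝ => x ^ 2 - P * x + Q) (Icc (-1) y) := by fun_prop
    have f1 : 0 < (1 + y) * a := by positivity
    have f2 : 0 < (1 - y) * b := by positivity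
    have hyv : y ^ 2 - P * y + Q < 0 := by
      have : y ^ 2 - P * y + Q = - ((1 - y ^ 2) * (1 - a - b)) := by rw [hP, hQ]; ring
      rw [this]
      have : 0 < (1 - y ^ 2) * (1 - a - b) := mul_pos e3 (by linarith)
      linarith
    obtain ⟨s, ⟨hs1, hs2⟩, hs⟩ := intermediate_value_Ioo' hy.1.le hc
      (show (0:ℝ) ∈ Ioo _ _ from ⟨hyv, by nlinarith⟩)
    simp only at hs
    have hQ' : Q = s * (P - s) := by nlinarith
    have g1 : y < P - s := by
      have : (y - s) * (y - (P - s)) < 0 := by nlinarith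
      by_contra hcon
      push Not at hcon
      nlinarith [mul_nonneg (sub_nonneg.2 hs2.le) (sub_nonneg.2 hcon)]
    have g2 : P - s < 1 := by
      have : 0 < (1 - s) * (1 - (P - s)) := by nlinarith
      have := (mul_pos_iff_of_pos_left (by linarith [hy.2] : 0 < 1 - s)).1 this
      linarith
    refine ⟨(s, P - s), ⟨hs1, hs2, g1, g2⟩, ?_⟩
    simp only [phi, Prod.mk.injEq]
    constructor
    · rw [← div_eq_mul_inv, div_eq_iff (by positivity)]; nlinarith
    · rw [← div_eq_mul_inv, div_eq_iff (by positivity)]; nlinarith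

lemma DS_meas (y : ℝ) : MeasurableSet (DS y) := by
  unfold DS
  measurability

noncomputable def fF (α γ : ℂ) (y : ℝ) (p : ℝ × ℝ) : ℂ :=
  ((p.2 - p.1 : ℝ) : ℂ) * (((1 - p.1 ^ 2) * (1 - p.2 ^ 2) : ℝ) : ℂ) ^ (α - 1) *
    (((y - p.1) * (p.2 - y) : ℝ) : ℂ) ^ (γ - 1)

def TS : Set (ℝ × (ℝ × ℝ)) := {z | -1 < z.2.1 ∧ z.2.1 < z.1 ∧ z.1 < z.2.2 ∧ z.2.2 < 1}

lemma TS_meas : MeasurableSet TS := by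
  unfold TS
  measurability

noncomputable def F (α γ : ℂ) : ℝ × (ℝ × ℝ) → ℂ := TS.indicator (fun z => fF α γ z.1 z.2)

lemma F_meas (α γ : ℂ) : Measurable (F α γ) := by
  unfold F fF
  refine Measurable.indicator ?_ TS_meas
  fun_prop

lemma F_norm (α γ : ℂ) (z) : F α.re γ.re z = ((‖F α γ z‖ : ℝ) : ℂ) := by
  unfold F fF
  by_cases h : z ∈ TS
  · rw [indicator_of_mem h, indicator_of_mem h]
    obtain ⟨h1, h2, h3, h4⟩ := h
    rw [norm_mul, norm_mul, Complex.ofReal_mul (_ * _) (norm _), Complex.ofReal_mul (norm _), norm_cpow' , norm_cpow',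
      Complex.norm_of_nonneg (by linarith)]
    · exact mul_pos (by linarith) (by linarith)
    · exact mul_pos (by nlinarith) (by nlinarith)
  · rw [indicator_of_notMem h, indicator_of_notMem h]; simp

lemma F_sec_y (α γ : ℂ) (y : ℝ) : (fun p => F α γ (y, p)) = (DS y).indicator (fF α γ y) := rfl

lemma fF_eq (α γ : ℂ) {y : ℝ} (hy : y ∈ Ioo (-1:ℝ) 1) (p : ℝ × ℝ) (hp : p ∈ DS y) :
    fF α γ y p = (2 * (4:ℂ) ^ (α - 1) * (((y - (-1) : ℝ) : ℂ) ^ (α + γ - 1) * ((1 - y : ℝ) : ℂ) ^ (α + γ - 1))) *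
      (|(phi' y p).det| • dF α γ (phi y p)) := by
  have e1 : 0 < 1 + y := by linarith [hy.1]
  have e2 : 0 < 1 - y := by linarith [hy.2]
  have e3 : 0 < 1 - y ^ 2 := by nlinarith
  have hm : phi y p ∈ {p : ℝ × ℝ | 0 < p.1 ∧ 0 < p.2 ∧ p.1 + p.2 < 1} := by
    rw [← phi_image hy]; exact mem_image_of_mem _ hp
  rw [dF, indicator_of_mem hm, phi_wy hy, phi_det hy, abs_div, abs_neg,
    abs_of_pos (by linarith [hp.2.1, hp.2.2.1] : 0 < p.2 - p.1), abs_of_pos (by positivity : 0 < 2 * (1 - y ^ 2))]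
  obtain ⟨m1, m2, m3⟩ := hm
  obtain ⟨h1, h2, h3, h4⟩ := hp
  have q1 : 0 < (1 - p.1 ^ 2) * (1 - p.2 ^ 2) := mul_pos (by nlinarith) (by nlinarith)
  have q2 : 0 < (y - p.1) * (p.2 - y) := mul_pos (by linarith) (by linarith)
  rw [← Complex.mul_cpow_ofReal_nonneg m1.le m2.le, ← Complex.ofReal_mul,
    ← Complex.mul_cpow_ofReal_nonneg (by linarith) (by linarith), ← Complex.ofReal_mul,
    show (y - (-1)) * (1 - y) = 1 - y ^ 2 by ring]
  have k1 : (1 - p.1 ^ 2) * (1 - p.2 ^ 2) = (4 : ℝ) * ((1 - y ^ 2) * ((phi y p).1 * (phi y p).2)) := by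
    unfold phi
    rw [show 1 - y ^ 2 = (1 + y) * (1 - y) by ring]
    field_simp
    ring
  have k2 : (y - p.1) * (p.2 - y) = (1 - y ^ 2) * ((y - p.1) * (p.2 - y) * (1 - y ^ 2)⁻¹) := by
    field_simp
  unfold fF
  set W := (phi y p).1 * (phi y p).2 with hW
  have hWp : 0 < W := mul_pos m1 m2
  set V := (y - p.1) * (p.2 - y) * (1 - y ^ 2)⁻¹ with hV
  have hVp : 0 < V := by positivity
  rw [k1, k2]
  set c := 1 - y ^ 2 with hcdef
  rw [Complex.ofReal_mul 4, Complex.mul_cpow_ofReal_nonneg (by norm_num) (by positivity),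
    Complex.ofReal_mul c, Complex.mul_cpow_ofReal_nonneg e3.le hWp.le,
    Complex.ofReal_mul c, Complex.mul_cpow_ofReal_nonneg e3.le hVp.le]
  have hc0 : (c : ℂ) ≠ 0 := by exact_mod_cast e3.ne'
  rw [show α + γ - 1 = (α - 1) + (γ - 1) + 1 by ring, Complex.cpow_add _ _ hc0, Complex.cpow_add _ _ hc0,
    Complex.cpow_one, Complex.real_smul]
  push_cast
  field_simp

lemma F_sec_y_int {α γ : ℂ} (hα : 0 < α.re) (hγ : 0 < γ.re) (y : ℝ) :
    Integrable (fun p => F α γ (y, p)) ∧ ∫ p, F α γ (y, p) =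
      (Ioo (-1:ℝ) 1).indicator (fun y => (2 * (4:ℂ) ^ (α - 1) * (Complex.Gamma α ^ 2 * Complex.Gamma γ / Complex.Gamma (2 * α + γ))) *
        (((y - (-1) : ℝ) : ℂ) ^ (α + γ - 1) * ((1 - y : ℝ) : ℂ) ^ (α + γ - 1))) y := by
  rw [F_sec_y, integrable_indicator_iff (DS_meas y), MeasureTheory.integral_indicator (DS_meas y)]
  by_cases h : y ∈ Ioo (-1:ℝ) 1
  · have hd := dF_int hα hγ
    have hder : ∀ x ∈ DS y, HasFDerivWithinAt (phi y) (phi' y x) (DS y) x :=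
      fun x _ => (phi_deriv y x).hasFDerivWithinAt
    have i1 := (integrableOn_image_iff_integrableOn_abs_det_fderiv_smul volume (DS_meas y) hder (phi_inj h) (dF α γ)).1 hd.1.integrableOn
    have i2 := integral_image_eq_integral_abs_det_fderiv_smul volume (DS_meas y) hder (phi_inj h) (dF α γ)
    have i3 : ∫ p in phi y '' DS y, dF α γ p = ∫ p, dF α γ p := by
      rw [phi_image h]
      apply setIntegral_eq_integral_of_forall_compl_eq_zero
      intro x hx
      exact indicator_of_notMem hx _
    rw [i3, hd.2] at i2
    constructor
    · refine (IntegrableOn.congr_fun (i1.const_mul _) (fun p hp => (fF_eq α γ h p hp).symm) (DS_meas y))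
    · rw [setIntegral_congr_fun (DS_meas y) (fF_eq α γ h), MeasureTheory.integral_const_mul, ← i2, indicator_of_mem h]
      ring
  · have : DS y = ∅ := by
      ext p
      simp only [DS, mem_ofPred_eq, mem_empty_iff_false, iff_false]
      rintro ⟨h1, h2, h3, h4⟩
      exact h ⟨by linarith, by linarith⟩
    simp [this, h]

lemma F_int {α γ : ℂ} (hα : 0 < α.re) (hγ : 0 < γ.re) :
    Integrable (F α γ) ∧ ∫ y, ∫ p, F α γ (y, p) =
      (2 * (4:ℂ) ^ (α - 1) * (Complex.Gamma α ^ 2 * Complex.Gamma γ / Complex.Gamma (2 * α + γ))) *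
      ((2 : ℂ) ^ (2 * α + 2 * γ - 1) * (Complex.Gamma (α + γ) ^ 2 / Complex.Gamma (2 * α + 2 * γ))) := by
  constructor
  · refine int_prod (F_meas α γ) (F_norm α γ) (fun x => (F_sec_y_int hα hγ x).1) ?_
    simp only [fun x => (F_sec_y_int (α := α.re) (γ := γ.re) (by simpa) (by simpa) x).2]
    rw [integrable_indicator_iff measurableSet_Ioo]
    exact (beta_ab (by norm_num) (by simp; linarith) (by simp; linarith)).1.const_mul _
  · simp only [fun x => (F_sec_y_int hα hγ x).2]
    rw [MeasureTheory.integral_indicator measurableSet_Ioo, MeasureTheory.integral_const_mul,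
      (beta_ab (by norm_num) (by simp; linarith) (by simp; linarith)).2]
    rw [show α + γ + (α + γ) = 2 * α + 2 * γ by ring]
    norm_num
    ring_nf
    tauto

def ES : Set (ℝ × ℝ) := {p | -1 < p.1 ∧ p.1 < p.2 ∧ p.2 < 1}

noncomputable def H (α γ : ℂ) : ℝ × ℝ → ℂ := ES.indicator (fun p =>
  (((1 - p.1 ^ 2) * (1 - p.2 ^ 2) : ℝ) : ℂ) ^ (α - 1) * ((p.2 - p.1 : ℝ) : ℂ) ^ (2 * γ))

lemma F_sec_p_int {α γ : ℂ} (hγ : 0 < γ.re) (p : ℝ × ℝ) :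
    ∫ y, F α γ (y, p) = H α γ p * (Complex.Gamma γ ^ 2 / Complex.Gamma (2 * γ)) := by
  by_cases h : p ∈ ES
  · obtain ⟨h1, h2, h3⟩ := id h
    have e : (fun y => F α γ (y, p)) = (Ioo p.1 p.2).indicator (fun y =>
      (((p.2 - p.1 : ℝ) : ℂ) * (((1 - p.1 ^ 2) * (1 - p.2 ^ 2) : ℝ) : ℂ) ^ (α - 1)) *
      (((y - p.1 : ℝ) : ℂ) ^ (γ - 1) * ((p.2 - y : ℝ) : ℂ) ^ (γ - 1))) := by
      ext y
      by_cases hy : y ∈ Ioo p.1 p.2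
      · rw [indicator_of_mem hy, F, indicator_of_mem (show (y, p) ∈ TS from ⟨h1, hy.1, hy.2, h3⟩), fF,
          ← Complex.mul_cpow_ofReal_nonneg (by linarith [hy.1]) (by linarith [hy.2]), ← Complex.ofReal_mul]
      · rw [indicator_of_notMem hy, F, indicator_of_notMem]
        exact fun hh => hy ⟨hh.2.1, hh.2.2.1⟩
    rw [e, MeasureTheory.integral_indicator measurableSet_Ioo, MeasureTheory.integral_const_mul, (beta_ab h2 hγ hγ).2,
      H, indicator_of_mem h]
    have hc0 : ((p.2 - p.1 : ℝ) : ℂ) ≠ 0 := by exact_mod_cast (sub_pos.2 h2).ne'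
    rw [show γ + γ = 2 * γ by ring, Complex.cpow_sub _ _ hc0, Complex.cpow_one]
    field_simp
  · have : (fun y => F α γ (y, p)) = fun _ => 0 := by
      ext y
      rw [F, indicator_of_notMem]
      exact fun hh => h ⟨hh.1, hh.2.1.trans hh.2.2.1, hh.2.2.2⟩
    rw [this, H, indicator_of_notMem h]
    simp

lemma H_int {α γ : ℂ} (hα : 0 < α.re) (hγ : 0 < γ.re) :
    Integrable (H α γ) ∧ (∫ p, H α γ p) * (Complex.Gamma γ ^ 2 / Complex.Gamma (2 * γ)) =
      (2 * (4:ℂ) ^ (α - 1) * (Complex.Gamma α ^ 2 * Complex.Gamma γ / Complex.Gamma (2 * α + γ))) *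
      ((2 : ℂ) ^ (2 * α + 2 * γ - 1) * (Complex.Gamma (α + γ) ^ 2 / Complex.Gamma (2 * α + 2 * γ))) := by
  obtain ⟨h1, h2⟩ := F_int hα hγ
  rw [Measure.volume_eq_prod] at h1
  have g0 : Complex.Gamma γ ^ 2 / Complex.Gamma (2 * γ) ≠ 0 :=
    div_ne_zero (pow_ne_zero _ (Complex.Gamma_ne_zero_of_re_pos hγ))
      (Complex.Gamma_ne_zero_of_re_pos (by simpa))
  constructor
  · have := h1.integral_prod_right
    simp only [F_sec_p_int hγ] at this
    have h3 := this.mul_const (Complex.Gamma γ ^ 2 / Complex.Gamma (2 * γ))⁻¹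
    simp only [mul_assoc, mul_inv_cancel₀ g0, mul_one] at h3
    exact h3
  · rw [← h2, ← MeasureTheory.integral_mul_const]
    simp only [← F_sec_p_int hγ]
    exact (integral_integral_swap (f := fun y p => F α γ (y, p)) h1).symm

theorem stmt14 (lam ν : ℂ) (hlam : -(1 / 2 : ℝ) < lam.re) (hν : 0 < ν.re) :
    (∫ s in (-1 : ℝ)..1, ∫ t in (-1 : ℝ)..1,
        ((1 - s ^ 2 : ℝ) : ℂ) ^ (lam - 1 / 2 : ℂ) *
          ((1 - t ^ 2 : ℝ) : ℂ) ^ (lam - 1 / 2 : ℂ) *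
          ((|s - t| : ℝ) : ℂ) ^ (2 * ν)) =
      (2 : ℂ) ^ (4 * lam + 2 * ν) * Complex.Gamma (lam + 1 / 2) ^ 2 /
          Complex.Gamma (2 * lam + 1 + ν) *
        (Complex.Gamma (lam + ν + 1 / 2) ^ 2 * Complex.Gamma (1 + 2 * ν) /
          (Complex.Gamma (2 * lam + 2 * ν + 1) * Complex.Gamma (1 + ν))) := by
  have hα : 0 < (lam + 1 / 2).re := by
    have : (1 / 2 : ℂ).re = 1 / 2 := by norm_num
    rw [Complex.add_re, this]; linarith
  obtain ⟨h1, h2⟩ := H_int hα hν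
  have hν0 : ν ≠ 0 := by rintro rfl; simp at hν
  have hsq : ∀ x ∈ Ioo (-1:ℝ) 1, 0 < 1 - x ^ 2 := fun x hx => by nlinarith [hx.1, hx.2]
  have key : ∀ s t : ℝ, H (lam + 1 / 2) ν (s, t) + H (lam + 1 / 2) ν (t, s) =
      (Ioo (-1:ℝ) 1).indicator (fun s => (Ioo (-1:ℝ) 1).indicator (fun t =>
        ((1 - s ^ 2 : ℝ) : ℂ) ^ (lam - 1 / 2 : ℂ) *
          ((1 - t ^ 2 : ℝ) : ℂ) ^ (lam - 1 / 2 : ℂ) *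
          ((|s - t| : ℝ) : ℂ) ^ (2 * ν)) t) s := by
    intro s t
    have hl : lam + 1 / 2 - 1 = lam - 1 / 2 := by ring
    by_cases hs : s ∈ Ioo (-1:ℝ) 1
    · by_cases ht : t ∈ Ioo (-1:ℝ) 1
      · rw [indicator_of_mem hs, indicator_of_mem ht,
          ← Complex.mul_cpow_ofReal_nonneg (hsq s hs).le (hsq t ht).le, ← Complex.ofReal_mul]
        unfold H
        rcases lt_trichotomy s t with h | h | h
        · rw [indicator_of_mem (show (s, t) ∈ ES from ⟨hs.1, h, ht.2⟩),
            indicator_of_notMem (show (t, s) ∉ ES from fun hh => lt_asymm h hh.2.1), hl,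
            abs_of_neg (sub_neg.2 h), add_zero, neg_sub]
        · subst h
          rw [indicator_of_notMem (show (s, s) ∉ ES from fun hh => lt_irrefl _ hh.2.1)]
          simp [hν0]
        · rw [indicator_of_mem (show (t, s) ∈ ES from ⟨ht.1, h, hs.2⟩),
            indicator_of_notMem (show (s, t) ∉ ES from fun hh => lt_asymm h hh.2.1), hl,
            abs_of_pos (sub_pos.2 h), zero_add]
          simp only [mul_comm]
      · rw [indicator_of_mem hs, indicator_of_notMem ht, H, indicator_of_notMem, indicator_of_notMem, add_zero]
        · exact fun hh => ht ⟨hh.1, hh.2.1.trans hh.2.2⟩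
        · exact fun hh => ht ⟨hh.1.trans hh.2.1, hh.2.2⟩
    · rw [indicator_of_notMem hs, H, indicator_of_notMem, indicator_of_notMem, add_zero]
      · exact fun hh => hs ⟨hh.1.trans hh.2.1, hh.2.2⟩
      · exact fun hh => hs ⟨hh.1, hh.2.1.trans hh.2.2⟩
  have main : (∫ s in (-1 : ℝ)..1, ∫ t in (-1 : ℝ)..1,
        ((1 - s ^ 2 : ℝ) : ℂ) ^ (lam - 1 / 2 : ℂ) *
          ((1 - t ^ 2 : ℝ) : ℂ) ^ (lam - 1 / 2 : ℂ) *
          ((|s - t| : ℝ) : ℂ) ^ (2 * ν)) = 2 * ∫ p, H (lam + 1 / 2) ν p := by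
    rw [Measure.volume_eq_prod] at h1 ⊢
    simp only [intervalIntegral.integral_of_le (by norm_num : (-1:ℝ) ≤ 1), integral_Ioc_eq_integral_Ioo]
    have hsw := integral_prod_swap (μ := (volume : Measure ℝ)) (ν := (volume : Measure ℝ)) (H (lam + 1 / 2) ν)
    have hadd := integral_add h1 h1.swap
    have hpr := integral_prod _ (h1.add h1.swap)
    simp only [Pi.add_apply, Function.comp_apply, Prod.swap_prod_mk, key] at hpr hadd
    rw [hsw, ← two_mul] at hadd
    rw [← hadd, hpr, ← MeasureTheory.integral_indicator measurableSet_Ioo]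
    congr 1
    ext s
    by_cases hs : s ∈ Ioo (-1:ℝ) 1
    · simp only [indicator_of_mem hs]
      rw [← MeasureTheory.integral_indicator measurableSet_Ioo]
    · simp only [indicator_of_notMem hs, integral_zero]
  rw [main]
  have n1 := Complex.Gamma_ne_zero_of_re_pos hν
  have n2 : Complex.Gamma (2 * ν) ≠ 0 := Complex.Gamma_ne_zero_of_re_pos (by simpa)
  rw [add_comm 1 (2 * ν), add_comm 1 ν, Complex.Gamma_add_one _ hν0,
    Complex.Gamma_add_one _ (by simpa : 2 * ν ≠ 0)]
  rw [show 2 * (lam + 1 / 2) + ν = 2 * lam + 1 + ν by ring,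
    show 2 * (lam + 1 / 2) + 2 * ν - 1 = 2 * lam + 2 * ν by ring,
    show 2 * (lam + 1 / 2) + 2 * ν = 2 * lam + 2 * ν + 1 by ring,
    show lam + 1 / 2 + ν = lam + ν + 1 / 2 by ring] at h2
  have hI := eq_div_of_mul_eq (div_ne_zero (pow_ne_zero 2 n1) n2) h2
  have n3 : Complex.Gamma (2 * lam + 1 + ν) ≠ 0 := Complex.Gamma_ne_zero_of_re_pos (by simp; linarith)
  have n4 : Complex.Gamma (2 * lam + 2 * ν + 1) ≠ 0 := Complex.Gamma_ne_zero_of_re_pos (by simp; linarith)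
  have hp : (2:ℂ) ^ (4 * lam + 2 * ν) = 2 * (4 : ℂ) ^ (lam + 1 / 2 - 1) * 2 ^ (2 * lam + 2 * ν) := by
    have h4 : (4:ℂ) ^ (lam + 1 / 2 - 1) = 2 ^ (2 * lam - 1) := by
      rw [show (4:ℂ) = ((2:ℝ):ℂ) * ((2:ℝ):ℂ) by norm_num,
        Complex.mul_cpow_ofReal_nonneg (by norm_num) (by norm_num)]
      push_cast
      rw [← Complex.cpow_add _ _ two_ne_zero]
      ring_nf
    rw [h4, show 4 * lam + 2 * ν = 1 + (2 * lam - 1) + (2 * lam + 2 * ν) by ring,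
      Complex.cpow_add _ _ two_ne_zero, Complex.cpow_add _ _ two_ne_zero, Complex.cpow_one]
  rw [hI, hp]
  field_simp
end
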